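/- Let P be a set of path axioms. A nested sequent X is derivable in the shallow nested calculus SKT + NestSt(P) if and only if X is derivable in the deep nested calculus DKT + DeepPr(P). -/

import Mathlib

/-!
Both calculi are compared with a third one, a cumulative labeled calculus `LD P` on arbitrary
finite directed graphs, whose sequents consist of an edge set and a set of labeled formulae. Its
diamond rule propagates along all paths licensed by `(P ∪ I(P))*`, and its box rule has a premise
for every choice of the successor label, so no renaming of eigenvariables is ever needed.

A nested sequent is called valid (`Val`) when every labeled graph receiving a homomorphism from its
tree is derivable in `LD P`. Both calculi are sound for validity (`val_of_skt`, `val_of_dkt`).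
For the shallow calculus, the display rules, weakening and contraction do not change which
homomorphisms have to be considered, or only restrict them, and the structural rule of a path axiom
amounts to removing an edge which is parallel to a licensed path (`LD.sim`): as the completion is
closed under composition, every path through the removed edge can be rerouted. For the deep
calculus, a homomorphism maps paths of the propagation graph to paths with the same string.

Conversely, any set of nested sequents closed under the deep rules contains all valid sequents
(`Closed.of_val`): a valid sequent is derivable as a labeled graph, by the identity homomorphism,
and that derivation, with a fresh label chosen at each box rule, only visits trees, each of which is
a nested sequent. Since nested rules for conjunction and disjunction erase their principal formula,
this reading keeps track of formulae only up to covering (`Cov`).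

It remains that both calculi have these closure properties. For the deep one this holds by
definition (`dkt_closed`). For the shallow one (`skt_closed`), the display property
(`skt_display`) moves any node to the root; the structural rules of `P` yield those of all axioms in
`(P ∪ I(P))*`, the inverses being obtained by display (`skt_pstar`). To propagate `A` from `u` to
`v` along a path with string `Π`, let `U` and `V` be the whole sequent displayed at `u` and at `v`.
From `A, V` the calculus derives `U, ★{V}`, as `U` contains `⟨?⟩A`, and then `U, ★₁{… ★ₙ{V} …}`
with `★₁ … ★ₙ` given by `Π`. This copy of `V` hangs at `u` by a chain parallel to the path from `u`
to `v`, so it can be folded onto that path by merging sibling structures (`skt_path`). The result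
is `V, V`, which contracts to `V`.
-/

set_option autoImplicit false

/-! # Common definitions: tense logics, nested/labeled/display calculi
    (following Ciabattoni, Lyon, Ramanayake, Tiu,
     "Display to Labeled Proofs and Back Again for Tense Logics") -/

/-- Diamonds: `wd` = ◇ (white diamond), `bd` = ◆ (black diamond). -/
inductive Dmd : Type
  | wd
  | bd
deriving DecidableEq, Repr

/-- Tense formulae in negation normal form:
    `A ::= p | p̄ | A ∧ A | A ∨ A | □A | ◇A | ■A | ◆A`. -/
inductive Formula : Type
  | pos : Nat → Formula      -- propositional variable p
  | neg : Nat → Formula      -- negated propositional variable p̄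
  | and : Formula → Formula → Formula
  | or : Formula → Formula → Formula
  | box : Formula → Formula   -- □
  | dia : Formula → Formula   -- ◇
  | bbox : Formula → Formula  -- ■
  | bdia : Formula → Formula  -- ◆
deriving DecidableEq, Repr

/-- The De Morgan dual `Ā` of a formula `A`. -/
def Formula.dual : Formula → Formula
  | .pos p => .neg p
  | .neg p => .pos p
  | .and A B => .or A.dual B.dual
  | .or A B => .and A.dual B.dual
  | .box A => .dia A.dual
  | .dia A => .box A.dual
  | .bbox A => .bdia A.dual
  | .bdia A => .bbox A.dual

/-- `A → B` is defined as `Ā ∨ B`. -/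
def Formula.imp (A B : Formula) : Formula := A.dual.or B

/-- `A ↔ B` is defined as `(A → B) ∧ (B → A)`. -/
def Formula.iffF (A B : Formula) : Formula := (A.imp B).and (B.imp A)

/-- `⟨?⟩A` for a diamond `⟨?⟩ ∈ {◇, ◆}`. -/
def dmdF : Dmd → Formula → Formula
  | .wd, A => .dia A
  | .bd, A => .bdia A

/-- `⟨?⟩₁…⟨?⟩ₘ A` for a string of diamonds. -/
def applyDmds : List Dmd → Formula → Formula
  | [], A => A
  | d :: ds, A => dmdF d (applyDmds ds A)

/-- A general path axiom `ΠA → ΣA`, given by the strings `Π` (ant) and `Σ` (suc). -/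
structure GenPath : Type where
  ant : List Dmd
  suc : List Dmd

/-- A path axiom `ΠA → ⟨?⟩A`. -/
structure PathAx : Type where
  ant : List Dmd
  suc : Dmd
deriving DecidableEq

/-- Every path axiom is a general path axiom. -/
def pathToGen (F : PathAx) : GenPath := ⟨F.ant, [F.suc]⟩

/-- All instances `ΠA → ΣA` of the general path axioms in `GP`. -/
def gpInstances (GP : Set GenPath) : Set Formula :=
  {F | ∃ gp ∈ GP, ∃ A : Formula, F = (applyDmds gp.ant A).imp (applyDmds gp.suc A)}

/-- The Hilbert system `Kt + S`: classical propositional axioms, modus ponens,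
    the tense axioms, and necessitation for □ and ■, plus the axioms in `S`. -/
inductive KtProof (S : Set Formula) : Formula → Prop
  | ax {A : Formula} : A ∈ S → KtProof S A
  | pl1 (A B : Formula) : KtProof S (A.imp (B.imp A))
  | pl2 (A B : Formula) : KtProof S ((B.dual.imp A.dual).imp (A.imp B))
  | pl3 (A B C : Formula) :
      KtProof S ((A.imp (B.imp C)).imp ((A.imp B).imp (A.imp C)))
  | tense1 (A : Formula) : KtProof S (A.imp (Formula.box (Formula.bdia A)))
  | tense2 (A : Formula) : KtProof S (A.imp (Formula.bbox (Formula.dia A)))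
  | kbox (A B : Formula) :
      KtProof S ((Formula.box (A.imp B)).imp ((Formula.box A).imp (Formula.box B)))
  | kbbox (A B : Formula) :
      KtProof S ((Formula.bbox (A.imp B)).imp ((Formula.bbox A).imp (Formula.bbox B)))
  | boxdual (A : Formula) :
      KtProof S ((Formula.box A).iffF (Formula.dia A.dual).dual)
  | bboxdual (A : Formula) :
      KtProof S ((Formula.bbox A).iffF (Formula.bdia A.dual).dual)
  | mp {A B : Formula} : KtProof S (A.imp B) → KtProof S A → KtProof S B
  | necbox {A : Formula} : KtProof S A → KtProof S (Formula.box A)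
  | necbbox {A : Formula} : KtProof S A → KtProof S (Formula.bbox A)

/-! ## Nested sequents -/

/-- Nested sequents: `X ::= ε | A | X, X | ∘{X} | •{X}`. -/
inductive NSeq : Type
  | empty
  | fml : Formula → NSeq
  | comma : NSeq → NSeq → NSeq
  | white : NSeq → NSeq   -- ∘{X}
  | black : NSeq → NSeq   -- •{X}
deriving DecidableEq, Repr

/-- Comma is associative and commutative with unit ε: the induced congruence. -/
inductive NEquiv : NSeq → NSeq → Prop
  | refl (X : NSeq) : NEquiv X X
  | symm {X Y : NSeq} : NEquiv X Y → NEquiv Y X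
  | trans {X Y Z : NSeq} : NEquiv X Y → NEquiv Y Z → NEquiv X Z
  | comm (X Y : NSeq) : NEquiv (X.comma Y) (Y.comma X)
  | assoc (X Y Z : NSeq) : NEquiv ((X.comma Y).comma Z) (X.comma (Y.comma Z))
  | unit (X : NSeq) : NEquiv (X.comma NSeq.empty) X
  | commaCongr {X X' Y Y' : NSeq} :
      NEquiv X X' → NEquiv Y Y' → NEquiv (X.comma Y) (X'.comma Y')
  | whiteCongr {X Y : NSeq} : NEquiv X Y → NEquiv X.white Y.white
  | blackCongr {X Y : NSeq} : NEquiv X Y → NEquiv X.black Y.black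

/-- `★₁{… ★ₙ{Y} …}` where `★ⱼ = ∘` if `⟨?⟩ⱼ = ◇` and `★ⱼ = •` if `⟨?⟩ⱼ = ◆`. -/
def nestDmds : List Dmd → NSeq → NSeq
  | [], Y => Y
  | .wd :: ds, Y => (nestDmds ds Y).white
  | .bd :: ds, Y => (nestDmds ds Y).black

/-- The structural rules `NestSt(GP)` (premise, conclusion): for each
    `ΠA → ΣA ∈ GP`, from `X, ★Σ{Y}` infer `X, ★Π{Y}`. -/
def NestSt (GP : Set GenPath) : NSeq → NSeq → Prop :=
  fun prem concl => ∃ gp ∈ GP, ∃ X Y : NSeq,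
    prem = X.comma (nestDmds gp.suc Y) ∧ concl = X.comma (nestDmds gp.ant Y)

/-- The empty set of extension rules on nested sequents. -/
def NoNest : NSeq → NSeq → Prop := fun _ _ => False

/-- The shallow nested (display) calculus `SKT` extended with the
    structural rules `Ext` (relating premise to conclusion); nested sequents are
    treated up to the congruence `NEquiv` (comma is AC with unit ε). -/
inductive SKT (Ext : NSeq → NSeq → Prop) : NSeq → Prop
  | id (X : NSeq) (p : Nat) :
      SKT Ext ((X.comma (.fml (.pos p))).comma (.fml (.neg p)))
  | orR {X : NSeq} {A B : Formula} :
      SKT Ext (X.comma ((NSeq.fml A).comma (.fml B))) →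
      SKT Ext (X.comma (.fml (.or A B)))
  | andR {X : NSeq} {A B : Formula} :
      SKT Ext (X.comma (.fml A)) → SKT Ext (X.comma (.fml B)) →
      SKT Ext (X.comma (.fml (.and A B)))
  | ctr {X Y : NSeq} : SKT Ext (X.comma (Y.comma Y)) → SKT Ext (X.comma Y)
  | wk {X Y : NSeq} : SKT Ext X → SKT Ext (X.comma Y)
  | rf {X Y : NSeq} : SKT Ext (X.comma Y.white) → SKT Ext (X.black.comma Y)
  | rp {X Y : NSeq} : SKT Ext (X.comma Y.black) → SKT Ext (X.white.comma Y)
  | bbox {X : NSeq} {A : Formula} :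
      SKT Ext (X.comma (NSeq.fml A).black) → SKT Ext (X.comma (.fml (.bbox A)))
  | box {X : NSeq} {A : Formula} :
      SKT Ext (X.comma (NSeq.fml A).white) → SKT Ext (X.comma (.fml (.box A)))
  | bdia {X Y : NSeq} {A : Formula} :
      SKT Ext ((X.comma (Y.comma (.fml A)).black).comma (.fml (.bdia A))) →
      SKT Ext ((X.comma Y.black).comma (.fml (.bdia A)))
  | dia {X Y : NSeq} {A : Formula} :
      SKT Ext ((X.comma (Y.comma (.fml A)).white).comma (.fml (.dia A))) →
      SKT Ext ((X.comma Y.white).comma (.fml (.dia A)))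
  | ext {X Y : NSeq} : Ext X Y → SKT Ext X → SKT Ext Y
  | equiv {X Y : NSeq} : SKT Ext X → NEquiv X Y → SKT Ext Y

/-! ## Deep nested calculus -/

/-- One-hole contexts over nested sequents (up to `NEquiv` this suffices). -/
inductive Ctx : Type
  | hole
  | commaL : Ctx → NSeq → Ctx
  | white : Ctx → Ctx
  | black : Ctx → Ctx

/-- Filling the hole of a context with a nested sequent. -/
def Ctx.fill : Ctx → NSeq → NSeq
  | .hole, X => X
  | .commaL C Y, X => (C.fill X).comma Y
  | .white C, X => (C.fill X).white
  | .black C, X => (C.fill X).black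

/-- The deep nested calculus `DKT` extended with rules `Ext`
    (premise, conclusion); sequents are treated up to `NEquiv`. -/
inductive DKT (Ext : NSeq → NSeq → Prop) : NSeq → Prop
  | id (C : Ctx) (p : Nat) :
      DKT Ext (C.fill ((NSeq.fml (.pos p)).comma (.fml (.neg p))))
  | andD {C : Ctx} {Y : NSeq} {A B : Formula} :
      DKT Ext (C.fill ((NSeq.fml A).comma Y)) →
      DKT Ext (C.fill ((NSeq.fml B).comma Y)) →
      DKT Ext (C.fill ((NSeq.fml (.and A B)).comma Y))
  | orD {C : Ctx} {Y : NSeq} {A B : Formula} :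
      DKT Ext (C.fill ((NSeq.fml A).comma ((NSeq.fml B).comma Y))) →
      DKT Ext (C.fill ((NSeq.fml (.or A B)).comma Y))
  | bboxD {C : Ctx} {A : Formula} :
      DKT Ext (C.fill ((NSeq.fml (.bbox A)).comma (NSeq.fml A).black)) →
      DKT Ext (C.fill (.fml (.bbox A)))
  | boxD {C : Ctx} {A : Formula} :
      DKT Ext (C.fill ((NSeq.fml (.box A)).comma (NSeq.fml A).white)) →
      DKT Ext (C.fill (.fml (.box A)))
  | bdia1 {C : Ctx} {Y : NSeq} {A : Formula} :
      DKT Ext (C.fill ((Y.comma (.fml A)).black.comma (.fml (.bdia A)))) →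
      DKT Ext (C.fill (Y.black.comma (.fml (.bdia A))))
  | bdia2 {C : Ctx} {Y : NSeq} {A : Formula} :
      DKT Ext (C.fill ((Y.comma (.fml (.bdia A))).white.comma (.fml A))) →
      DKT Ext (C.fill ((Y.comma (.fml (.bdia A))).white))
  | dia1 {C : Ctx} {Y : NSeq} {A : Formula} :
      DKT Ext (C.fill ((Y.comma (.fml A)).white.comma (.fml (.dia A)))) →
      DKT Ext (C.fill (Y.white.comma (.fml (.dia A))))
  | dia2 {C : Ctx} {Y : NSeq} {A : Formula} :
      DKT Ext (C.fill ((Y.comma (.fml (.dia A))).black.comma (.fml A))) →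
      DKT Ext (C.fill ((Y.comma (.fml (.dia A))).black))
  | ext {X Y : NSeq} : Ext X Y → DKT Ext X → DKT Ext Y
  | equiv {X Y : NSeq} : DKT Ext X → NEquiv X Y → DKT Ext Y

/-! ## Display rules and display equivalence -/

/-- `DisplayDeriv X Z`: `Z` is derivable from `X` using only the display rules
    (rf) and (rp) (and rearrangement by the comma-congruence `NEquiv`). -/
inductive DisplayDeriv : NSeq → NSeq → Prop
  | refl (X : NSeq) : DisplayDeriv X X
  | equiv {X Y Z : NSeq} : NEquiv X Y → DisplayDeriv Y Z → DisplayDeriv X Z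
  | rf {X Y Z : NSeq} :
      DisplayDeriv (X.black.comma Y) Z → DisplayDeriv (X.comma Y.white) Z
  | rp {X Y Z : NSeq} :
      DisplayDeriv (X.white.comma Y) Z → DisplayDeriv (X.comma Y.black) Z

/-- Two nested sequents are display equivalent when each is derivable from the
    other using only the display rules. -/
def DisplayEquiv (X Y : NSeq) : Prop := DisplayDeriv X Y ∧ DisplayDeriv Y X

/-! ## Labeled sequents and the labeled calculus G3Kt -/

abbrev Label : Type := Nat

/-- A set of relational atoms `Rxy`. -/
abbrev RelSet : Type := Finset (Label × Label)

/-- A labeled sequent `R, Γ`. -/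
abbrev LSeq : Type := RelSet × Multiset (Label × Formula)

/-- The label `z` occurs in the labeled sequent `S`. -/
def occursLS (z : Label) (S : LSeq) : Prop :=
  (∃ w, (z, w) ∈ S.1 ∨ (w, z) ∈ S.1) ∨ ∃ A, (z, A) ∈ S.2

/-- `R_◇ x y := Rxy` and `R_◆ x y := Ryx`. -/
def relAtom : Dmd → Label → Label → Label × Label
  | .wd, x, y => (x, y)
  | .bd, x, y => (y, x)

/-- Relational atoms of a `Π`-chain through the list of labels `ls`. -/
def chainAtoms : List Dmd → List Label → List (Label × Label)
  | d :: ds, a :: b :: rest => relAtom d a b :: chainAtoms ds (b :: rest)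
  | _, _ => []

/-- `ls` is a chain of labels for the diamond string `ds` from `x` to `y`
    (an empty string forces `x = y`). -/
def IsChainList (ds : List Dmd) (x y : Label) (ls : List Label) : Prop :=
  ls.length = ds.length + 1 ∧ ls.head? = some x ∧ ls.getLast? = some y

/-- The structural rules `LabSt(GP)` (premise, conclusion): for `ΠA → ΣA ∈ GP`,
    from `R, R_Π x y, R_Σ x y, Γ` infer `R, R_Π x y, Γ`, where all labels in
    `R_Σ x y` other than `x, y` are eigenvariables. -/
def LabSt (GP : Set GenPath) : LSeq → LSeq → Prop :=
  fun prem concl => ∃ gp ∈ GP,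
    ∃ (R : RelSet) (Γ : Multiset (Label × Formula)) (x y : Label)
      (als sls : List Label),
      IsChainList gp.ant x y als ∧ IsChainList gp.suc x y sls ∧
      concl = (R ∪ (chainAtoms gp.ant als).toFinset, Γ) ∧
      prem = (R ∪ (chainAtoms gp.ant als).toFinset ∪
                (chainAtoms gp.suc sls).toFinset, Γ) ∧
      (∀ z ∈ sls, z ≠ x → z ≠ y → ¬ occursLS z concl)

/-- The empty set of extension rules on labeled sequents. -/
def NoExt : LSeq → LSeq → Prop := fun _ _ => False

/-- Derivations in the labeled calculus `G3Kt` extended with rules `Ext`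
    (relating premise to conclusion). -/
inductive G3KtD (Ext : LSeq → LSeq → Prop) :
    RelSet → Multiset (Label × Formula) → Type
  | id (R : RelSet) (Γ : Multiset (Label × Formula)) (x : Label) (p : Nat) :
      G3KtD Ext R ((x, .pos p) ::ₘ (x, .neg p) ::ₘ Γ)
  | orR (R : RelSet) (Γ : Multiset (Label × Formula)) (x : Label) (A B : Formula)
      (D : G3KtD Ext R ((x, A) ::ₘ (x, B) ::ₘ Γ)) :
      G3KtD Ext R ((x, .or A B) ::ₘ Γ)
  | andR (R : RelSet) (Γ : Multiset (Label × Formula)) (x : Label) (A B : Formula)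
      (D1 : G3KtD Ext R ((x, A) ::ₘ Γ)) (D2 : G3KtD Ext R ((x, B) ::ₘ Γ)) :
      G3KtD Ext R ((x, .and A B) ::ₘ Γ)
  | boxR (R : RelSet) (Γ : Multiset (Label × Formula)) (x y : Label) (A : Formula)
      (hy : ¬ occursLS y (R, (x, Formula.box A) ::ₘ Γ))
      (D : G3KtD Ext (insert (x, y) R) ((y, A) ::ₘ Γ)) :
      G3KtD Ext R ((x, .box A) ::ₘ Γ)
  | diaR (R : RelSet) (Γ : Multiset (Label × Formula)) (x y : Label) (A : Formula)
      (h : (x, y) ∈ R)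
      (D : G3KtD Ext R ((y, A) ::ₘ (x, Formula.dia A) ::ₘ Γ)) :
      G3KtD Ext R ((x, .dia A) ::ₘ Γ)
  | bboxR (R : RelSet) (Γ : Multiset (Label × Formula)) (x y : Label) (A : Formula)
      (hy : ¬ occursLS y (R, (x, Formula.bbox A) ::ₘ Γ))
      (D : G3KtD Ext (insert (y, x) R) ((y, A) ::ₘ Γ)) :
      G3KtD Ext R ((x, .bbox A) ::ₘ Γ)
  | bdiaR (R : RelSet) (Γ : Multiset (Label × Formula)) (x y : Label) (A : Formula)
      (h : (y, x) ∈ R)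
      (D : G3KtD Ext R ((y, A) ::ₘ (x, Formula.bdia A) ::ₘ Γ)) :
      G3KtD Ext R ((x, .bdia A) ::ₘ Γ)
  | ext (R' : RelSet) (Γ' : Multiset (Label × Formula))
      (R : RelSet) (Γ : Multiset (Label × Formula))
      (h : Ext (R', Γ') (R, Γ)) (D : G3KtD Ext R' Γ') : G3KtD Ext R Γ

/-- Derivability in `G3Kt + Ext`. -/
def G3KtDeriv (Ext : LSeq → LSeq → Prop) (R : RelSet)
    (Γ : Multiset (Label × Formula)) : Prop :=
  Nonempty (G3KtD Ext R Γ)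

/-- `Q` holds of every labeled sequent occurring in the derivation `D`
    (including the end sequent). -/
def G3KtD.allSeq {Ext : LSeq → LSeq → Prop} (Q : LSeq → Prop) :
    ∀ {R : RelSet} {Γ : Multiset (Label × Formula)}, G3KtD Ext R Γ → Prop
  | _, _, .id R Γ x p => Q (R, (x, .pos p) ::ₘ (x, .neg p) ::ₘ Γ)
  | _, _, .orR R Γ x A B D => Q (R, (x, .or A B) ::ₘ Γ) ∧ D.allSeq Q
  | _, _, .andR R Γ x A B D1 D2 =>
      Q (R, (x, .and A B) ::ₘ Γ) ∧ D1.allSeq Q ∧ D2.allSeq Q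
  | _, _, .boxR R Γ x _ A _ D => Q (R, (x, .box A) ::ₘ Γ) ∧ D.allSeq Q
  | _, _, .diaR R Γ x _ A _ D => Q (R, (x, .dia A) ::ₘ Γ) ∧ D.allSeq Q
  | _, _, .bboxR R Γ x _ A _ D => Q (R, (x, .bbox A) ::ₘ Γ) ∧ D.allSeq Q
  | _, _, .bdiaR R Γ x _ A _ D => Q (R, (x, .bdia A) ::ₘ Γ) ∧ D.allSeq Q
  | _, _, .ext _ _ R Γ _ D => Q (R, Γ) ∧ D.allSeq Q

/-! ## Paths, inverses, compositions, completion, propagation rules -/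

/-- The inverse of a diamond: `◇⁻¹ = ◆` and `◆⁻¹ = ◇`. -/
def Dmd.inv : Dmd → Dmd
  | .wd => .bd
  | .bd => .wd

/-- The inverse `I(F)` of a path axiom `F`. -/
def PathAx.inv (F : PathAx) : PathAx := ⟨(F.ant.map Dmd.inv).reverse, F.suc.inv⟩

/-- `I(P)`, the set of inverses of the path axioms in `P`. -/
def invSet (P : Set PathAx) : Set PathAx := {F | ∃ G ∈ P, F = G.inv}

/-- The completion `P*`: the smallest set of path axioms containing `P`,
    containing `◇A → ◇A` and `◆A → ◆A`, and closed under compositions. -/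
inductive Completion (P : Set PathAx) : PathAx → Prop
  | base {F : PathAx} : F ∈ P → Completion P F
  | wrefl : Completion P ⟨[Dmd.wd], Dmd.wd⟩
  | brefl : Completion P ⟨[Dmd.bd], Dmd.bd⟩
  | comp {F G : PathAx} (i : Nat) (hi : i < G.ant.length) :
      Completion P F → Completion P G → G.ant.get ⟨i, hi⟩ = F.suc →
      Completion P ⟨G.ant.take i ++ F.ant ++ G.ant.drop (i + 1), G.suc⟩

/-- `(P ∪ I(P))*`. -/
def PStar (P : Set PathAx) : PathAx → Prop := Completion (P ∪ invSet P)

/-- A path from `x` to `y` with the given string of diamonds in the propagation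
    graph determined by the edge set `E`: each `Rxy` contributes the labeled
    edges `(x, y, ◇)` and `(y, x, ◆)`. -/
inductive LPath (E : Finset (Label × Label)) : Label → Label → List Dmd → Prop
  | nil (x : Label) : LPath E x x []
  | fwd {x z y : Label} {ds : List Dmd} :
      (x, z) ∈ E → LPath E z y ds → LPath E x y (Dmd.wd :: ds)
  | bwd {x z y : Label} {ds : List Dmd} :
      (z, x) ∈ E → LPath E z y ds → LPath E x y (Dmd.bd :: ds)

/-- The labeled propagation rules `LabPr(P)` (premise, conclusion):
    from `R, x:⟨?⟩A, y:A, Γ` infer `R, x:⟨?⟩A, Γ`, provided there is a path `π`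
    from `x` to `y` in the propagation graph of the premise whose string `Π`
    satisfies `ΠA → ⟨?⟩A ∈ (P ∪ I(P))*`. -/
def LabPr (P : Set PathAx) : LSeq → LSeq → Prop :=
  fun prem concl =>
    ∃ (R : RelSet) (Γ : Multiset (Label × Formula)) (x y : Label)
      (A : Formula) (d : Dmd) (Pi : List Dmd),
      prem = (R, (x, dmdF d A) ::ₘ (y, A) ::ₘ Γ) ∧
      concl = (R, (x, dmdF d A) ::ₘ Γ) ∧
      LPath R x y Pi ∧ PStar P ⟨Pi, d⟩

/-! ## Labeled graphs, labeled polytrees, and the translations 𝔏 and 𝔑 -/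

/-- A labeled graph `(V, E, L)`: vertices decorated with multisets of formulae. -/
structure LGraph : Type where
  V : Finset Label
  E : Finset (Label × Label)
  L : Label → Multiset Formula

/-- Union of labeled graphs (multiset union of labels at shared vertices). -/
def LGraph.union (G H : LGraph) : LGraph :=
  ⟨G.V ∪ H.V, G.E ∪ H.E, fun z => G.L z + H.L z⟩

/-- Isomorphism of labeled graphs: a bijection between the vertex sets
    preserving edges and vertex labels. -/
def LGraph.Iso (G H : LGraph) : Prop :=
  ∃ f : Label → Label, Set.BijOn f ↑G.V ↑H.V ∧
    (∀ u ∈ G.V, ∀ v ∈ G.V, ((u, v) ∈ G.E ↔ (f u, f v) ∈ H.E)) ∧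
    (∀ v ∈ G.V, G.L v = H.L (f v))

/-- A labeled graph is a labeled polytree when its underlying undirected
    graph is a tree. -/
def LGraph.IsPolytree (G : LGraph) : Prop :=
  (∀ x y : Label, (x, y) ∈ G.E → (y, x) ∉ G.E) ∧
  (∀ e ∈ G.E, e.1 ∈ G.V ∧ e.2 ∈ G.V) ∧
  ((SimpleGraph.fromRel fun a b => (a, b) ∈ G.E).induce (↑G.V : Set Label)).IsTree

/-- The translation `𝔏ₓ` from nested sequents to labeled graphs (relational,
    since fresh vertices may be chosen arbitrarily): `LabT x X G` states that
    `G` is a labeled graph obtained by translating `X` starting at vertex `x`. -/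
inductive LabT : Label → NSeq → LGraph → Prop
  | empty (x : Label) : LabT x .empty ⟨∅, ∅, fun _ => 0⟩
  | fml (x : Label) (A : Formula) :
      LabT x (.fml A) ⟨{x}, ∅, fun z => if z = x then {A} else 0⟩
  | comma {x : Label} {X Y : NSeq} {G H : LGraph} :
      LabT x X G → LabT x Y H → G.V ∩ H.V ⊆ {x} →
      LabT x (X.comma Y) (G.union H)
  | white {x y : Label} {X : NSeq} {G : LGraph} :
      LabT y X G → x ∉ G.V → x ≠ y →
      LabT x X.white ⟨insert x (insert y G.V), insert (x, y) G.E, G.L⟩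
  | black {x y : Label} {X : NSeq} {G : LGraph} :
      LabT y X G → x ∉ G.V → x ≠ y →
      LabT x X.black ⟨insert x (insert y G.V), insert (y, x) G.E, G.L⟩

/-- The translation `𝔑ₓ` from labeled polytrees (rooted at a chosen vertex `x`)
    to nested sequents: the inverse of the translation `𝔏ₓ`. -/
def NTrans (x : Label) (G : LGraph) (X : NSeq) : Prop := LabT x X G

/-- The labeled graph of a labeled sequent `R, Γ`: vertices are the occurring
    labels, edges are given by `R`, and each vertex `x` is labeled by the
    multiset `{A | x:A ∈ Γ}`. -/
def toLGraph (R : RelSet) (Γ : Multiset (Label × Formula)) : LGraph where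
  V := R.image Prod.fst ∪ R.image Prod.snd ∪ (Γ.map Prod.fst).toFinset
  E := R
  L := fun z => (Γ.filter fun p => p.1 = z).map Prod.snd

/-- The multiset of labeled formulae of a labeled graph, read as a sequent. -/
def LGraph.toSeqGamma (G : LGraph) : Multiset (Label × Formula) :=
  G.V.val.bind fun v => (G.L v).map fun A => (v, A)

/-- The set of labels occurring in a labeled sequent. -/
def seqLabels (R : RelSet) (Γ : Multiset (Label × Formula)) : Set Label :=
  {z | (∃ w, (z, w) ∈ R ∨ (w, z) ∈ R) ∨ ∃ A, (z, A) ∈ Γ}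

/-- `R, Γ` is a labeled polytree sequent: its underlying undirected graph
    (on the occurring labels) is a tree. -/
def IsPolytreeSeq (R : RelSet) (Γ : Multiset (Label × Formula)) : Prop :=
  (∀ x y : Label, (x, y) ∈ R → (y, x) ∉ R) ∧
  ((SimpleGraph.fromRel fun a b => (a, b) ∈ R).induce (seqLabels R Γ)).IsTree

/-- The labeled edges `(u, v, ◇)` and `(v, u, ◆)` of the propagation graph
    determined by an edge set. -/
def propEdges (E : Finset (Label × Label)) : Set (Label × Label × Dmd) :=
  {e | ∃ u v : Label, (u, v) ∈ E ∧ (e = (u, v, Dmd.wd) ∨ e = (v, u, Dmd.bd))}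

/-- The deep propagation rules `DeepPr(P)` (premise, conclusion), expressed via
    the labeled polytree representation of nested sequents: from
    `X[⟨?⟩A]ᵢ[A]ⱼ` infer `X[⟨?⟩A]ᵢ[∅]ⱼ`, provided there is a path from node `i`
    (= `u`) to node `j` (= `v`) in the propagation graph of the premise whose
    string `Π` satisfies `ΠA → ⟨?⟩A ∈ (P ∪ I(P))*`. -/
def DeepPrL (P : Set PathAx) : NSeq → NSeq → Prop :=
  fun prem concl =>
    ∃ (r : Label) (G : LGraph) (u v : Label) (A : Formula) (d : Dmd)
      (Pi : List Dmd),
      LabT r prem G ∧ LPath G.E u v Pi ∧ PStar P ⟨Pi, d⟩ ∧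
      dmdF d A ∈ G.L u ∧ A ∈ G.L v ∧
      LabT r concl ⟨G.V, G.E, fun z => if z = v then (G.L v).erase A else G.L z⟩

/-- Substitution of the label `y` by the label `x`. -/
def subLabel (x y z : Label) : Label := if z = y then x else z

namespace TensePf

/-! ### The comma congruence -/

/-- The setoid of nested sequents up to the comma congruence. -/
def nsSetoid : Setoid NSeq := ⟨NEquiv, NEquiv.refl, NEquiv.symm, NEquiv.trans⟩

/-- Nested sequents modulo the comma congruence. They form a commutative monoid, so that
congruences between nested sequents can be checked by `abel`. -/
def NQ : Type := Quotient nsSetoid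

/-- The class of a nested sequent. -/
def q (X : NSeq) : NQ := Quotient.mk nsSetoid X

theorem neq {X Y : NSeq} (h : q X = q Y) : NEquiv X Y := Quotient.exact h

theorem q_eq {X Y : NSeq} (h : NEquiv X Y) : q X = q Y := Quotient.sound h

instance : Add NQ := ⟨Quotient.map₂ NSeq.comma fun _ _ h _ _ h' => NEquiv.commaCongr h h'⟩

instance : Zero NQ := ⟨q .empty⟩

instance : AddCommMonoid NQ where
  add_assoc a b c := by
    induction a, b using Quotient.inductionOn₂
    induction c using Quotient.inductionOn
    exact q_eq (NEquiv.assoc _ _ _)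
  add_comm a b := by
    induction a, b using Quotient.inductionOn₂
    exact q_eq (NEquiv.comm _ _)
  add_zero a := by
    induction a using Quotient.inductionOn
    exact q_eq (NEquiv.unit _)
  zero_add a := by
    induction a using Quotient.inductionOn
    exact q_eq ((NEquiv.comm _ _).trans (NEquiv.unit _))
  nsmul := nsmulRec

theorem q_comma (X Y : NSeq) : q (X.comma Y) = q X + q Y := rfl
theorem q_empty : q .empty = 0 := rfl

/-! ### Uniform notation for the two modalities -/

/-- The structure `★{X}` belonging to a diamond: `∘{X}` for `◇`, `•{X}` for `◆`. -/
def str : Dmd → NSeq → NSeq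
  | .wd, X => X.white
  | .bd, X => X.black

/-- The box of the same orientation as a diamond: `□` for `◇`, `■` for `◆`. -/
def boxF : Dmd → Formula → Formula
  | .wd, A => .box A
  | .bd, A => .bbox A

theorem nestDmds_cons (d : Dmd) (ds : List Dmd) (Y : NSeq) :
    nestDmds (d :: ds) Y = str d (nestDmds ds Y) := by cases d <;> rfl

theorem nestDmds_append (ds es : List Dmd) (Y : NSeq) :
    nestDmds (ds ++ es) Y = nestDmds ds (nestDmds es Y) := by
  induction ds with
  | nil => rfl
  | cons d ds ih => rw [List.cons_append, nestDmds_cons, nestDmds_cons, ih]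

theorem str_congr (d : Dmd) {X Y : NSeq} (h : NEquiv X Y) : NEquiv (str d X) (str d Y) := by
  cases d
  · exact h.whiteCongr
  · exact h.blackCongr

@[simp] theorem inv_inv (d : Dmd) : d.inv.inv = d := by cases d <;> rfl

@[simp] theorem relAtom_inv (d : Dmd) (x y : Label) : relAtom d.inv x y = relAtom d y x := by
  cases d <;> rfl

theorem fill_congr (C : Ctx) {X Y : NSeq} (h : NEquiv X Y) : NEquiv (C.fill X) (C.fill Y) := by
  induction C with
  | hole => exact h
  | commaL C Z ih => exact ih.commaCongr (.refl _)
  | white C ih => exact ih.whiteCongr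
  | black C ih => exact ih.blackCongr

/-- Composition of contexts: `C₂` is put into the hole of `C₁`. -/
def comp : Ctx → Ctx → Ctx
  | .hole, K => K
  | .commaL C Y, K => .commaL (comp C K) Y
  | .white C, K => .white (comp C K)
  | .black C, K => .black (comp C K)

theorem fill_comp (C K : Ctx) (X : NSeq) : (comp C K).fill X = C.fill (K.fill X) := by
  induction C with
  | hole => rfl
  | commaL C Z ih => simp [comp, Ctx.fill, ih]
  | white C ih => simp [comp, Ctx.fill, ih]
  | black C ih => simp [comp, Ctx.fill, ih]

/-- The context `★{[ ]}, Y`. -/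
def strCtx (d : Dmd) (Y : NSeq) : Ctx :=
  match d with
  | .wd => .commaL (.white .hole) Y
  | .bd => .commaL (.black .hole) Y

theorem fill_strCtx (d : Dmd) (Y Z : NSeq) :
    (strCtx d Y).fill Z = (str d Z).comma Y := by cases d <;> rfl

/-! ### Paths -/

theorem LPath.step {E : Finset (Label × Label)} {d : Dmd} {x z y : Label} {ds : List Dmd}
    (h : relAtom d x z ∈ E) (p : LPath E z y ds) : LPath E x y (d :: ds) := by
  cases d
  · exact .fwd h p
  · exact .bwd h p

theorem LPath.uncons {E : Finset (Label × Label)} {d : Dmd} {x y : Label} {ds : List Dmd}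
    (p : LPath E x y (d :: ds)) : ∃ z, relAtom d x z ∈ E ∧ LPath E z y ds := by
  cases p with
  | fwd h p => exact ⟨_, h, p⟩
  | bwd h p => exact ⟨_, h, p⟩

theorem LPath.append {E : Finset (Label × Label)} {ds es : List Dmd} :
    ∀ {x y z : Label}, LPath E x y ds → LPath E y z es → LPath E x z (ds ++ es) := by
  induction ds with
  | nil => intro x y z p p'; cases p; exact p'
  | cons d ds ih =>
    intro x y z p p'
    obtain ⟨w, hw, p⟩ := LPath.uncons p
    exact LPath.step hw (ih p p')

theorem LPath.reverse {E : Finset (Label × Label)} {ds : List Dmd} :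
    ∀ {x y : Label}, LPath E x y ds → LPath E y x (ds.map Dmd.inv).reverse := by
  induction ds with
  | nil => intro x y p; cases p; exact .nil _
  | cons d ds ih =>
    intro x y p
    obtain ⟨w, hw, p⟩ := LPath.uncons p
    rw [List.map_cons, List.reverse_cons]
    exact LPath.append (ih p) (LPath.step (by simpa using hw) (.nil _))

theorem LPath.map {E E' : Finset (Label × Label)} {ds : List Dmd} (f : Label → Label)
    (hf : ∀ e ∈ E, (f e.1, f e.2) ∈ E') :
    ∀ {x y : Label}, LPath E x y ds → LPath E' (f x) (f y) ds := by
  induction ds with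
  | nil => intro x y p; cases p; exact .nil _
  | cons d ds ih =>
    intro x y p
    obtain ⟨w, hw, p⟩ := LPath.uncons p
    refine LPath.step ?_ (ih p)
    cases d
    · exact hf _ hw
    · exact hf _ hw

theorem pstar_refl (P : Set PathAx) (d : Dmd) : PStar P ⟨[d], d⟩ := by
  cases d
  · exact .wrefl
  · exact .brefl

theorem pstar_comp {P : Set PathAx} {pre post Pi : List Dmd} {d e : Dmd}
    (h : PStar P ⟨pre ++ d :: post, e⟩) (h' : PStar P ⟨Pi, d⟩) :
    PStar P ⟨pre ++ (Pi ++ post), e⟩ := by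
  have := Completion.comp (F := ⟨Pi, d⟩) (G := ⟨pre ++ d :: post, e⟩) pre.length (by simp) h' h
    (by simp)
  simpa [PStar] using this

/-- Edges of `E` may be simulated in `E'` by paths licensed by `(P ∪ I(P))*`; then the same holds
for whole paths, because the completion is closed under composition. -/
def Sim (P : Set PathAx) (E E' : Finset (Label × Label)) : Prop :=
  ∀ d x y, relAtom d x y ∈ E → ∃ Pi, LPath E' x y Pi ∧ PStar P ⟨Pi, d⟩

theorem Sim.path {P : Set PathAx} {E E' : Finset (Label × Label)} (h : Sim P E E')
    {ds : List Dmd} : ∀ {x y : Label}, LPath E x y ds → ∃ es, LPath E' x y es ∧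
      ∀ pre e, PStar P ⟨pre ++ ds, e⟩ → PStar P ⟨pre ++ es, e⟩ := by
  induction ds with
  | nil => intro x y p; cases p; exact ⟨[], .nil _, fun _ _ h => h⟩
  | cons d ds ih =>
    intro x y p
    obtain ⟨w, hw, p⟩ := LPath.uncons p
    obtain ⟨Pi, hp, hP⟩ := h d x w hw
    obtain ⟨es, hes, hE⟩ := ih p
    refine ⟨Pi ++ es, LPath.append hp hes, fun pre e he => ?_⟩
    have h1 := pstar_comp he hP
    rw [← List.append_assoc] at h1 ⊢
    exact hE _ _ h1

theorem Sim.insert {P : Set PathAx} {E E' : Finset (Label × Label)} (h : Sim P E E')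
    (a : Label × Label) : Sim P (insert a E) (insert a E') := by
  intro d x y hxy
  rcases Finset.mem_insert.1 hxy with rfl | hxy
  · exact ⟨[d], LPath.step (Finset.mem_insert_self _ _) (.nil _), pstar_refl P d⟩
  · obtain ⟨Pi, hp, hP⟩ := h d x y hxy
    exact ⟨Pi, LPath.map id (fun e he => Finset.mem_insert_of_mem he) hp, hP⟩

/-! ### A cumulative labeled calculus -/

/-- A cumulative calculus on arbitrary labeled graphs: sequents are an edge set `E` and a set `Γ`
of labeled formulae, principal formulae are kept, and the diamond rule propagates along all paths
licensed by `(P ∪ I(P))*`. The box rule asks for a premise for *every* label `y` instead of a fresh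
one; this makes all structural properties hold without any renaming. -/
inductive LD (P : Set PathAx) : Finset (Label × Label) → Set (Label × Formula) → Prop
  | id {E Γ} (x p) : (x, Formula.pos p) ∈ Γ → (x, Formula.neg p) ∈ Γ → LD P E Γ
  | and {E Γ} (x A B) : (x, Formula.and A B) ∈ Γ →
      LD P E (insert (x, A) Γ) → LD P E (insert (x, B) Γ) → LD P E Γ
  | or {E Γ} (x A B) : (x, Formula.or A B) ∈ Γ →
      LD P E (insert (x, A) (insert (x, B) Γ)) → LD P E Γ
  | box {E Γ} (d x A) : (x, boxF d A) ∈ Γ →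
      (∀ y, LD P (insert (relAtom d x y) E) (insert (y, A) Γ)) → LD P E Γ
  | dia {E Γ} (d x y A) (Pi : List Dmd) : (x, dmdF d A) ∈ Γ → LPath E x y Pi → PStar P ⟨Pi, d⟩ →
      LD P E (insert (y, A) Γ) → LD P E Γ

/-- Edges simulated by licensed paths may be removed. This is the admissibility of the structural
rules for path axioms. -/
theorem LD.sim {P : Set PathAx} {E : Finset (Label × Label)} {Γ : Set (Label × Formula)}
    (h : LD P E Γ) : ∀ {E' : Finset (Label × Label)}, Sim P E E' → LD P E' Γ := by
  induction h with
  | id x p h1 h2 => intro E' _; exact .id x p h1 h2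
  | and x A B h _ _ ih1 ih2 => intro E' hs; exact .and x A B h (ih1 hs) (ih2 hs)
  | or x A B h _ ih => intro E' hs; exact .or x A B h (ih hs)
  | box d x A h _ ih => intro E' hs; exact .box d x A h fun y => ih y (hs.insert _)
  | dia d x y A Pi h hp hP _ ih =>
    intro E' hs
    obtain ⟨es, hes, hE⟩ := hs.path hp
    exact .dia d x y A es h hes (hE [] d hP) (ih hs)

/-- `Emb E Γ X x`: the tree of `X` maps homomorphically into the labeled graph `(E, Γ)`, the root
going to `x`. -/
def Emb (E : Finset (Label × Label)) (Γ : Set (Label × Formula)) : NSeq → Label → Prop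
  | .empty, _ => True
  | .fml A, x => (x, A) ∈ Γ
  | .comma X Y, x => Emb E Γ X x ∧ Emb E Γ Y x
  | .white X, x => ∃ y, (x, y) ∈ E ∧ Emb E Γ X y
  | .black X, x => ∃ y, (y, x) ∈ E ∧ Emb E Γ X y

/-- A nested sequent is valid when every labeled graph receiving a homomorphism from its tree is
derivable. Contraction, weakening and the display rules trivially preserve this property. -/
def Val (P : Set PathAx) (X : NSeq) : Prop :=
  ∀ x E Γ, Emb E Γ X x → LD P E Γ

section Emb

variable {E E' : Finset (Label × Label)} {Γ Γ' : Set (Label × Formula)}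

theorem emb_str (d : Dmd) (X : NSeq) (x : Label) :
    Emb E Γ (str d X) x ↔ ∃ y, relAtom d x y ∈ E ∧ Emb E Γ X y := by cases d <;> rfl

theorem emb_mono (hE : E ⊆ E') (hΓ : Γ ⊆ Γ') {X : NSeq} :
    ∀ {x : Label}, Emb E Γ X x → Emb E' Γ' X x := by
  induction X with
  | empty => intro x h; trivial
  | fml A => intro x h; exact hΓ h
  | comma X Y ih1 ih2 => intro x h; exact ⟨ih1 h.1, ih2 h.2⟩
  | white X ih => rintro x ⟨y, h, h'⟩; exact ⟨y, hE h, ih h'⟩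
  | black X ih => rintro x ⟨y, h, h'⟩; exact ⟨y, hE h, ih h'⟩

theorem emb_equiv {X Y : NSeq} (h : NEquiv X Y) : ∀ x : Label, Emb E Γ X x ↔ Emb E Γ Y x := by
  induction h with
  | refl X => intro x; rfl
  | symm _ ih => intro x; exact (ih x).symm
  | trans _ _ ih1 ih2 => intro x; exact (ih1 x).trans (ih2 x)
  | comm X Y => intro x; exact and_comm
  | assoc X Y Z => intro x; exact and_assoc
  | unit X => intro x; exact and_iff_left trivial
  | commaCongr _ _ ih1 ih2 => intro x; exact and_congr (ih1 x) (ih2 x)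
  | whiteCongr _ ih => intro x; exact exists_congr fun y => and_congr_right fun _ => ih y
  | blackCongr _ ih => intro x; exact exists_congr fun y => and_congr_right fun _ => ih y

theorem emb_nest {ds : List Dmd} {Y : NSeq} : ∀ {x : Label}, Emb E Γ (nestDmds ds Y) x →
    ∃ y, LPath E x y ds ∧ Emb E Γ Y y := by
  induction ds with
  | nil => intro x h; exact ⟨x, .nil _, h⟩
  | cons d ds ih =>
    intro x h
    rw [nestDmds_cons, emb_str] at h
    obtain ⟨z, hz, h⟩ := h
    obtain ⟨y, p, h⟩ := ih h
    exact ⟨y, LPath.step hz p, h⟩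

theorem emb_fill {C : Ctx} {Z : NSeq} : ∀ {x : Label}, Emb E Γ (C.fill Z) x →
    ∃ y, Emb E Γ Z y ∧ ∀ {Z' E' Γ'}, E ⊆ E' → Γ ⊆ Γ' → Emb E' Γ' Z' y →
      Emb E' Γ' (C.fill Z') x := by
  induction C with
  | hole => intro x h; exact ⟨x, h, fun _ _ h' => h'⟩
  | commaL C Y ih =>
    intro x h
    obtain ⟨y, hy, k⟩ := ih h.1
    exact ⟨y, hy, fun hE hΓ h' => ⟨k hE hΓ h', emb_mono hE hΓ h.2⟩⟩
  | white C ih =>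
    rintro x ⟨z, hz, h⟩
    obtain ⟨y, hy, k⟩ := ih h
    exact ⟨y, hy, fun hE hΓ h' => ⟨z, hE hz, k hE hΓ h'⟩⟩
  | black C ih =>
    rintro x ⟨z, hz, h⟩
    obtain ⟨y, hy, k⟩ := ih h
    exact ⟨y, hy, fun hE hΓ h' => ⟨z, hE hz, k hE hΓ h'⟩⟩

end Emb

/-! ### Soundness of the shallow calculus -/

theorem val_of_skt {P : Set PathAx} {X : NSeq} (h : SKT (NestSt (pathToGen '' P)) X) :
    Val P X := by
  induction h with
  | id X p => rintro x E Γ ⟨⟨_, h1⟩, h2⟩; exact .id x p h1 h2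
  | orR _ ih =>
    rintro x E Γ ⟨h1, h2⟩
    refine .or x _ _ h2 (ih x _ _ ⟨emb_mono (Finset.Subset.refl _) ?_ h1, ?_, ?_⟩)
    · exact (Set.subset_insert _ _).trans (Set.subset_insert _ _)
    · exact Set.mem_insert _ _
    · exact Set.mem_insert_of_mem _ (Set.mem_insert _ _)
  | andR _ _ ih1 ih2 =>
    rintro x E Γ ⟨h1, h2⟩
    exact .and x _ _ h2
      (ih1 x _ _ ⟨emb_mono (Finset.Subset.refl _) (Set.subset_insert _ _) h1, Set.mem_insert _ _⟩)
      (ih2 x _ _ ⟨emb_mono (Finset.Subset.refl _) (Set.subset_insert _ _) h1, Set.mem_insert _ _⟩)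
  | ctr _ ih => rintro x E Γ ⟨h1, h2⟩; exact ih x _ _ ⟨h1, h2, h2⟩
  | wk _ ih => rintro x E Γ ⟨h1, _⟩; exact ih x _ _ h1
  | rf _ ih => rintro x E Γ ⟨⟨y, hy, h1⟩, h2⟩; exact ih y _ _ ⟨h1, x, hy, h2⟩
  | rp _ ih => rintro x E Γ ⟨⟨y, hy, h1⟩, h2⟩; exact ih y _ _ ⟨h1, x, hy, h2⟩
  | bbox _ ih =>
    rintro x E Γ ⟨h1, h2⟩
    exact .box .bd x _ h2 fun y => ih x _ _
      ⟨emb_mono (Finset.subset_insert _ _) (Set.subset_insert _ _) h1, y,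
        Finset.mem_insert_self _ _, Set.mem_insert _ _⟩
  | box _ ih =>
    rintro x E Γ ⟨h1, h2⟩
    exact .box .wd x _ h2 fun y => ih x _ _
      ⟨emb_mono (Finset.subset_insert _ _) (Set.subset_insert _ _) h1, y,
        Finset.mem_insert_self _ _, Set.mem_insert _ _⟩
  | bdia _ ih =>
    rintro x E Γ ⟨⟨h1, y, hy, h2⟩, h3⟩
    refine .dia .bd x y _ [.bd] h3 (.bwd hy (.nil _)) .brefl (ih x _ _ ⟨⟨?_, y, hy, ?_, ?_⟩, ?_⟩)
    · exact emb_mono (Finset.Subset.refl _) (Set.subset_insert _ _) h1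
    · exact emb_mono (Finset.Subset.refl _) (Set.subset_insert _ _) h2
    · exact Set.mem_insert _ _
    · exact Set.mem_insert_of_mem _ h3
  | dia _ ih =>
    rintro x E Γ ⟨⟨h1, y, hy, h2⟩, h3⟩
    refine .dia .wd x y _ [.wd] h3 (.fwd hy (.nil _)) .wrefl (ih x _ _ ⟨⟨?_, y, hy, ?_, ?_⟩, ?_⟩)
    · exact emb_mono (Finset.Subset.refl _) (Set.subset_insert _ _) h1
    · exact emb_mono (Finset.Subset.refl _) (Set.subset_insert _ _) h2
    · exact Set.mem_insert _ _
    · exact Set.mem_insert_of_mem _ h3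
  | ext he _ ih =>
    obtain ⟨gp, ⟨F, hF, rfl⟩, X, Y, rfl, rfl⟩ := he
    rintro x E Γ ⟨h1, h2⟩
    obtain ⟨y, p, h2⟩ := emb_nest h2
    have hsub : E ⊆ insert (relAtom F.suc x y) E := Finset.subset_insert _ _
    have key : LD P (insert (relAtom F.suc x y) E) Γ := by
      refine ih x _ _ ⟨emb_mono hsub (subset_refl _) h1, ?_⟩
      change Emb _ _ (nestDmds [F.suc] Y) x
      rw [nestDmds_cons, emb_str]
      exact ⟨y, Finset.mem_insert_self _ _, emb_mono hsub (subset_refl _) h2⟩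
    refine key.sim fun d a b hab => ?_
    rcases Finset.mem_insert.1 hab with hab | hab
    -- The new edge is traversed forwards (licensed by `F`) or backwards (licensed by `I(F)`).
    · by_cases hd : d = F.suc
      · subst hd
        have : a = x ∧ b = y := by
          cases hs : F.suc <;> rw [hs] at hab <;> simp [relAtom] at hab <;> tauto
        obtain ⟨rfl, rfl⟩ := this
        exact ⟨F.ant, p, .base (.inl hF)⟩
      · have : d = F.suc.inv ∧ a = y ∧ b = x := by
          cases hs : F.suc <;> rw [hs] at hab hd <;> cases d <;>
            simp [relAtom, Dmd.inv] at hab hd ⊢ <;> tauto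
        obtain ⟨rfl, rfl, rfl⟩ := this
        exact ⟨_, LPath.reverse p, .base (.inr ⟨F, hF, rfl⟩)⟩
    · exact ⟨[d], LPath.step hab (.nil _), pstar_refl P d⟩
  | equiv _ he ih => intro x E Γ h; exact ih x E Γ ((emb_equiv he x).2 h)

/-! ### Soundness of the deep calculus -/

/-- Homomorphisms from a labeled graph to a labeled sequent. -/
def Hom (f : Label → Label) (G : LGraph) (E : Finset (Label × Label))
    (Γ : Set (Label × Formula)) : Prop :=
  (∀ e ∈ G.E, (f e.1, f e.2) ∈ E) ∧ ∀ z A, A ∈ G.L z → (f z, A) ∈ Γ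

theorem emb_of_hom {r : Label} {X : NSeq} {G : LGraph} (h : LabT r X G) {f : Label → Label}
    {E : Finset (Label × Label)} {Γ : Set (Label × Formula)} (hf : Hom f G E Γ) :
    Emb E Γ X (f r) := by
  induction h with
  | empty x => trivial
  | fml x A => exact hf.2 x A (by simp)
  | comma _ _ _ ih1 ih2 =>
    refine ⟨ih1 ⟨fun e he => hf.1 e ?_, fun z A hA => hf.2 z A ?_⟩,
      ih2 ⟨fun e he => hf.1 e ?_, fun z A hA => hf.2 z A ?_⟩⟩
    · exact Finset.mem_union_left _ he
    · exact Multiset.mem_add.2 (.inl hA)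
    · exact Finset.mem_union_right _ he
    · exact Multiset.mem_add.2 (.inr hA)
  | white _ _ _ ih =>
    exact ⟨_, hf.1 _ (Finset.mem_insert_self _ _),
      ih ⟨fun e he => hf.1 e (Finset.mem_insert_of_mem he), hf.2⟩⟩
  | black _ _ _ ih =>
    exact ⟨_, hf.1 _ (Finset.mem_insert_self _ _),
      ih ⟨fun e he => hf.1 e (Finset.mem_insert_of_mem he), hf.2⟩⟩

theorem labT_support {r : Label} {X : NSeq} {G : LGraph} (h : LabT r X G) :
    (∀ e ∈ G.E, e.1 ∈ G.V ∧ e.2 ∈ G.V) ∧ ∀ z A, A ∈ G.L z → z ∈ G.V := by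
  induction h with
  | empty x => simp
  | fml x A =>
    refine ⟨by simp, fun z B hB => ?_⟩
    by_contra hz
    simp only [Finset.mem_singleton] at hz
    simp [hz] at hB
  | comma _ _ _ ih1 ih2 =>
    refine ⟨fun e he => ?_, fun z A hA => ?_⟩
    · rcases Finset.mem_union.1 he with he | he
      · exact ⟨Finset.mem_union_left _ (ih1.1 e he).1, Finset.mem_union_left _ (ih1.1 e he).2⟩
      · exact ⟨Finset.mem_union_right _ (ih2.1 e he).1, Finset.mem_union_right _ (ih2.1 e he).2⟩
    · rcases Multiset.mem_add.1 hA with hA | hA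
      · exact Finset.mem_union_left _ (ih1.2 z A hA)
      · exact Finset.mem_union_right _ (ih2.2 z A hA)
  | white _ _ _ ih =>
    refine ⟨fun e he => ?_, fun z A hA => ?_⟩
    · rcases Finset.mem_insert.1 he with rfl | he
      · simp
      · simp [ih.1 e he]
    · simp [ih.2 z A hA]
  | black _ _ _ ih =>
    refine ⟨fun e he => ?_, fun z A hA => ?_⟩
    · rcases Finset.mem_insert.1 he with rfl | he
      · simp
      · simp [ih.1 e he]
    · simp [ih.2 z A hA]

theorem hom_of_emb {r : Label} {X : NSeq} {G : LGraph} (h : LabT r X G)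
    {E : Finset (Label × Label)} {Γ : Set (Label × Formula)} :
    ∀ {x : Label}, Emb E Γ X x → ∃ f : Label → Label, f r = x ∧ Hom f G E Γ := by
  induction h with
  | empty r => intro x _; exact ⟨fun _ => x, rfl, by simp, by simp⟩
  | fml r A =>
    intro x h
    refine ⟨fun _ => x, rfl, by simp, fun z B hB => ?_⟩
    by_cases hz : z = r
    · simp only [hz, if_true, Multiset.mem_singleton] at hB; subst hB; exact h
    · simp [hz] at hB
  | @comma r X Y G H hG hH hd ih1 ih2 =>
    rintro x ⟨h1, h2⟩
    obtain ⟨f, hf, f1, f2⟩ := ih1 h1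
    obtain ⟨g, hg, g1, g2⟩ := ih2 h2
    have sG := labT_support hG
    have sH := labT_support hH
    have eG : ∀ z ∈ G.V, (if z ∈ G.V then f z else g z) = f z := fun z hz => if_pos hz
    have eH : ∀ z ∈ H.V, (if z ∈ G.V then f z else g z) = g z := by
      intro z hz
      split_ifs with h
      · have : z = r := Finset.mem_singleton.1 (hd (Finset.mem_inter.2 ⟨h, hz⟩))
        rw [this, hf, hg]
      · rfl
    refine ⟨fun z => if z ∈ G.V then f z else g z, ?_, fun e he => ?_, fun z A hA => ?_⟩
    · simp [hf, hg]
    · rcases Finset.mem_union.1 he with he | he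
      · simp only [eG _ (sG.1 e he).1, eG _ (sG.1 e he).2]; exact f1 e he
      · simp only [eH _ (sH.1 e he).1, eH _ (sH.1 e he).2]; exact g1 e he
    · rcases Multiset.mem_add.1 hA with hA | hA
      · simp only [eG _ (sG.2 z A hA)]; exact f2 z A hA
      · simp only [eH _ (sH.2 z A hA)]; exact g2 z A hA
  | @white r y X G hG hr hry ih =>
    rintro x ⟨z, hz, h⟩
    obtain ⟨f, hf, f1, f2⟩ := ih h
    have sG := labT_support hG
    have eG : ∀ w ∈ G.V, Function.update f r x w = f w := fun w hw =>
      Function.update_of_ne (by rintro rfl; exact hr hw) _ _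
    refine ⟨Function.update f r x, by simp, fun e he => ?_, fun w A hA => ?_⟩
    · rcases Finset.mem_insert.1 he with rfl | he
      · simp [Function.update_of_ne hry.symm, hf, hz]
      · rw [eG _ (sG.1 e he).1, eG _ (sG.1 e he).2]; exact f1 e he
    · rw [eG _ (sG.2 w A hA)]; exact f2 w A hA
  | @black r y X G hG hr hry ih =>
    rintro x ⟨z, hz, h⟩
    obtain ⟨f, hf, f1, f2⟩ := ih h
    have sG := labT_support hG
    have eG : ∀ w ∈ G.V, Function.update f r x w = f w := fun w hw =>
      Function.update_of_ne (by rintro rfl; exact hr hw) _ _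
    refine ⟨Function.update f r x, by simp, fun e he => ?_, fun w A hA => ?_⟩
    · rcases Finset.mem_insert.1 he with rfl | he
      · simp [Function.update_of_ne hry.symm, hf, hz]
      · rw [eG _ (sG.1 e he).1, eG _ (sG.1 e he).2]; exact f1 e he
    · rw [eG _ (sG.2 w A hA)]; exact f2 w A hA

theorem dmdF_ne (d : Dmd) (A : Formula) : dmdF d A ≠ A := by
  intro h
  have := congrArg sizeOf h
  cases d <;> simp [dmdF] at this

theorem val_of_dkt {P : Set PathAx} {X : NSeq} (h : DKT (DeepPrL P) X) : Val P X := by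
  have rE : ∀ E : Finset (Label × Label), E ⊆ E := fun _ => Finset.Subset.refl _
  have rΓ : ∀ Γ : Set (Label × Formula), Γ ⊆ Γ := fun _ => subset_refl _
  have iΓ : ∀ a (Γ : Set (Label × Formula)), Γ ⊆ insert a Γ := fun a Γ => Set.subset_insert a Γ
  have iE : ∀ a (Γ : Finset (Label × Label)), Γ ⊆ insert a Γ := fun a Γ => Finset.subset_insert a Γ
  induction h with
  | id C p =>
    intro x E Γ h
    obtain ⟨y, ⟨h1, h2⟩, _⟩ := emb_fill h
    exact .id y p h1 h2
  | andD _ _ ih1 ih2 =>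
    intro x E Γ h
    obtain ⟨y, ⟨h1, h2⟩, k⟩ := emb_fill h
    exact .and y _ _ h1
      (ih1 x _ _ (k (rE _) (iΓ _ _) ⟨Set.mem_insert _ _, emb_mono (rE _) (iΓ _ _) h2⟩))
      (ih2 x _ _ (k (rE _) (iΓ _ _) ⟨Set.mem_insert _ _, emb_mono (rE _) (iΓ _ _) h2⟩))
  | orD _ ih =>
    intro x E Γ h
    obtain ⟨y, ⟨h1, h2⟩, k⟩ := emb_fill h
    have hs := fun a b => (iΓ b Γ).trans (iΓ a _)
    exact .or y _ _ h1 (ih x _ _ (k (rE _) (hs _ _) ⟨Set.mem_insert _ _,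
      Set.mem_insert_of_mem _ (Set.mem_insert _ _), emb_mono (rE _) (hs _ _) h2⟩))
  | bboxD _ ih =>
    intro x E Γ h
    obtain ⟨y, h1, k⟩ := emb_fill h
    exact .box .bd y _ h1 fun z => ih x _ _ (k (iE _ _) (iΓ _ _)
      ⟨Set.mem_insert_of_mem _ h1, z, Finset.mem_insert_self _ _, Set.mem_insert _ _⟩)
  | boxD _ ih =>
    intro x E Γ h
    obtain ⟨y, h1, k⟩ := emb_fill h
    exact .box .wd y _ h1 fun z => ih x _ _ (k (iE _ _) (iΓ _ _)
      ⟨Set.mem_insert_of_mem _ h1, z, Finset.mem_insert_self _ _, Set.mem_insert _ _⟩)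
  | bdia1 _ ih =>
    intro x E Γ h
    obtain ⟨y, ⟨⟨z, hz, h1⟩, h2⟩, k⟩ := emb_fill h
    exact .dia .bd y z _ [.bd] h2 (.bwd hz (.nil _)) .brefl (ih x _ _ (k (rE _) (iΓ _ _)
      ⟨⟨z, hz, emb_mono (rE _) (iΓ _ _) h1, Set.mem_insert _ _⟩, Set.mem_insert_of_mem _ h2⟩))
  | bdia2 _ ih =>
    intro x E Γ h
    obtain ⟨y, ⟨z, hz, h1, h2⟩, k⟩ := emb_fill h
    exact .dia .bd z y _ [.bd] h2 (.bwd hz (.nil _)) .brefl (ih x _ _ (k (rE _) (iΓ _ _)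
      ⟨⟨z, hz, emb_mono (rE _) (iΓ _ _) h1, Set.mem_insert_of_mem _ h2⟩, Set.mem_insert _ _⟩))
  | dia1 _ ih =>
    intro x E Γ h
    obtain ⟨y, ⟨⟨z, hz, h1⟩, h2⟩, k⟩ := emb_fill h
    exact .dia .wd y z _ [.wd] h2 (.fwd hz (.nil _)) .wrefl (ih x _ _ (k (rE _) (iΓ _ _)
      ⟨⟨z, hz, emb_mono (rE _) (iΓ _ _) h1, Set.mem_insert _ _⟩, Set.mem_insert_of_mem _ h2⟩))
  | dia2 _ ih =>
    intro x E Γ h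
    obtain ⟨y, ⟨z, hz, h1, h2⟩, k⟩ := emb_fill h
    exact .dia .wd z y _ [.wd] h2 (.fwd hz (.nil _)) .wrefl (ih x _ _ (k (rE _) (iΓ _ _)
      ⟨⟨z, hz, emb_mono (rE _) (iΓ _ _) h1, Set.mem_insert_of_mem _ h2⟩, Set.mem_insert _ _⟩))
  | ext he _ ih =>
    obtain ⟨r, G, u, v, A, d, Pi, hprem, hp, hP, hu, hv, hconcl⟩ := he
    intro x E Γ h
    obtain ⟨f, rfl, f1, f2⟩ := hom_of_emb hconcl h
    have hu' : (f u, dmdF d A) ∈ Γ := by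
      apply f2 u
      dsimp only
      split_ifs with h
      · subst h; exact (Multiset.mem_erase_of_ne (dmdF_ne d A)).2 hu
      · exact hu
    refine .dia d (f u) (f v) A Pi hu' (LPath.map f f1 hp) hP
      (ih (f r) _ _ (emb_of_hom hprem ⟨f1, fun z B hB => ?_⟩))
    by_cases hz : z = v ∧ B = A
    · rw [hz.1, hz.2]; exact Set.mem_insert _ _
    · refine Set.mem_insert_of_mem _ (f2 z B ?_)
      dsimp only
      split_ifs with h
      · subst h; exact (Multiset.mem_erase_of_ne fun h => hz ⟨rfl, h⟩).2 hB
      · exact hB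
  | equiv _ he ih => intro x E Γ h; exact ih x E Γ ((emb_equiv he x).2 h)

/-! ### Labeled tree shapes -/

/-- The shape of a nested sequent: a rooted tree with labels at its nodes. `join s d t` hangs the
tree `t` below the root of `s` by a `★`-edge, `★` being the structure of `d`. -/
inductive Shape : Type
  | pt : Label → Shape
  | join : Shape → Dmd → Shape → Shape

namespace Shape

/-- The label of the root. -/
def root : Shape → Label
  | pt x => x
  | join s _ _ => s.root

/-- The nodes of a shape. -/
def V : Shape → Finset Label
  | pt x => {x}
  | join s _ t => s.V ∪ t.V

/-- The edges of a shape, oriented as the atoms `Rxy`. -/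
def E : Shape → Finset (Label × Label)
  | pt _ => ∅
  | join s d t => s.E ∪ insert (relAtom d s.root t.root) t.E

/-- All nodes of the shape carry distinct labels. -/
def Wf : Shape → Prop
  | pt _ => True
  | join s _ t => s.Wf ∧ t.Wf ∧ Disjoint s.V t.V

/-- The nested sequent obtained by putting `σ x` at each node `x`. -/
def seq (σ : Label → NSeq) : Shape → NSeq
  | pt x => σ x
  | join s d t => (s.seq σ).comma (str d (t.seq σ))

/-- Hang a new leaf `y` below the node `x`. -/
def attach (x : Label) (d : Dmd) (y : Label) : Shape → Shape
  | pt z => if z = x then join (pt z) d (pt y) else pt z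
  | join s e t => join (s.attach x d y) e (t.attach x d y)

theorem root_mem (s : Shape) : s.root ∈ s.V := by
  induction s with
  | pt x => simp [root, V]
  | join s d t ih _ => simp [root, V, ih]

theorem seq_congr {σ σ' : Label → NSeq} {s : Shape} (h : ∀ x ∈ s.V, NEquiv (σ x) (σ' x)) :
    NEquiv (s.seq σ) (s.seq σ') := by
  induction s with
  | pt x => exact h x (by simp [V])
  | join s d t ih1 ih2 =>
    exact (ih1 fun x hx => h x (by simp [V, hx])).commaCongr
      (str_congr d (ih2 fun x hx => h x (by simp [V, hx])))

theorem seq_eq {σ σ' : Label → NSeq} {s : Shape} (h : ∀ x ∈ s.V, σ x = σ' x) :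
    s.seq σ = s.seq σ' := by
  induction s with
  | pt x => exact h x (by simp [V])
  | join s d t ih1 ih2 =>
    simp only [seq]
    rw [ih1 fun x hx => h x (by simp [V, hx]), ih2 fun x hx => h x (by simp [V, hx])]

theorem seq_attach (σ : Label → NSeq) (x : Label) (d : Dmd) (y : Label) (s : Shape) :
    (s.attach x d y).seq σ =
      s.seq (Function.update σ x ((σ x).comma (str d (σ y)))) := by
  induction s with
  | pt z =>
    by_cases h : z = x
    · subst h; simp [attach, seq]
    · simp [attach, seq, h]
  | join s e t ih1 ih2 => simp only [attach, seq, ih1, ih2]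

theorem attach_of_not_mem {x y : Label} {d : Dmd} {s : Shape} (h : x ∉ s.V) :
    s.attach x d y = s := by
  induction s with
  | pt z =>
    have : z ≠ x := by rintro rfl; simp [V] at h
    simp [attach, this]
  | join s e t ih1 ih2 =>
    simp only [V, Finset.mem_union, not_or] at h
    simp [attach, ih1 h.1, ih2 h.2]

@[simp] theorem root_attach (x y : Label) (d : Dmd) (s : Shape) :
    (s.attach x d y).root = s.root := by
  induction s with
  | pt z => by_cases h : z = x <;> simp [attach, root, h]
  | join s e t ih1 _ => simp [attach, root, ih1]

theorem attach_spec {x y : Label} {d : Dmd} {s : Shape} (hw : s.Wf) (hx : x ∈ s.V)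
    (hy : y ∉ s.V) : (s.attach x d y).Wf ∧ (s.attach x d y).V = insert y s.V ∧
      (s.attach x d y).E = insert (relAtom d x y) s.E := by
  induction s with
  | pt z =>
    simp only [V, Finset.mem_singleton] at hx hy
    subst hx
    refine ⟨?_, ?_, ?_⟩
    · simp only [attach, if_true, Wf, V, Finset.disjoint_singleton, true_and]
      exact fun h => hy h.symm
    · simp only [attach, if_true, V]; ext a; simp [or_comm]
    · simp [attach, E, root]
  | join s e t ih1 ih2 =>
    obtain ⟨w1, w2, w3⟩ := hw
    simp only [V, Finset.mem_union, not_or] at hx hy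
    rcases hx with hx | hx
    · have hx' : x ∉ t.V := Finset.disjoint_left.1 w3 hx
      obtain ⟨a1, a2, a3⟩ := ih1 w1 hx hy.1
      simp only [attach, attach_of_not_mem hx', Wf, V, E, a2, a3, root_attach]
      refine ⟨⟨a1, w2, ?_⟩, ?_, ?_⟩
      · exact Finset.disjoint_insert_left.2 ⟨hy.2, w3⟩
      · exact Finset.insert_union _ _ _
      · exact Finset.insert_union _ _ _
    · have hx' : x ∉ s.V := Finset.disjoint_right.1 w3 hx
      obtain ⟨a1, a2, a3⟩ := ih2 w2 hx hy.2
      simp only [attach, attach_of_not_mem hx', Wf, V, E, a2, a3, root_attach]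
      refine ⟨⟨w1, a1, ?_⟩, ?_, ?_⟩
      · exact Finset.disjoint_insert_right.2 ⟨hy.1, w3⟩
      · exact Finset.union_insert _ _ _
      · rw [Finset.insert_comm, Finset.union_insert]

theorem edge_mem {s : Shape} {e : Label × Label} (he : e ∈ s.E) : e.1 ∈ s.V ∧ e.2 ∈ s.V := by
  induction s with
  | pt z => simp [E] at he
  | join s d t ih1 ih2 =>
    simp only [E, Finset.mem_union, Finset.mem_insert] at he
    simp only [V, Finset.mem_union]
    rcases he with he | rfl | he
    · exact ⟨.inl (ih1 he).1, .inl (ih1 he).2⟩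
    · cases d
      · exact ⟨.inl s.root_mem, .inr t.root_mem⟩
      · exact ⟨.inr t.root_mem, .inl s.root_mem⟩
    · exact ⟨.inr (ih2 he).1, .inr (ih2 he).2⟩

theorem step_mem {s : Shape} {d : Dmd} {x y : Label} (h : relAtom d x y ∈ s.E) :
    x ∈ s.V ∧ y ∈ s.V := by
  cases d
  · exact edge_mem h
  · exact (edge_mem h).symm

theorem path_mem {s : Shape} {x y : Label} {ds : List Dmd} (p : LPath s.E x y ds)
    (hx : x ∈ s.V) : y ∈ s.V := by
  induction p with
  | nil => exact hx
  | fwd h _ ih => exact ih (edge_mem h).2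
  | bwd h _ ih => exact ih (edge_mem h).1

/-- Every node of a shape determines a one-hole context. -/
theorem exists_ctx {x : Label} {s : Shape} (hw : s.Wf) (hx : x ∈ s.V) (σ : Label → NSeq) :
    ∃ C : Ctx, ∀ σ' : Label → NSeq, (∀ v, v ≠ x → σ' v = σ v) →
      NEquiv (s.seq σ') (C.fill (σ' x)) := by
  induction s with
  | pt z =>
    simp only [V, Finset.mem_singleton] at hx
    subst hx
    exact ⟨.hole, fun σ' _ => .refl _⟩
  | join s d t ih1 ih2 =>
    obtain ⟨w1, w2, w3⟩ := hw
    rcases Finset.mem_union.1 hx with hx | hx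
    · have hx' : x ∉ t.V := Finset.disjoint_left.1 w3 hx
      obtain ⟨C, hC⟩ := ih1 w1 hx
      refine ⟨.commaL C (str d (t.seq σ)), fun σ' h => ?_⟩
      have : t.seq σ' = t.seq σ := seq_eq fun v hv => h v (by rintro rfl; exact hx' hv)
      simp only [seq, this]
      exact (hC σ' h).commaCongr (.refl _)
    · have hx' : x ∉ s.V := Finset.disjoint_right.1 w3 hx
      obtain ⟨C, hC⟩ := ih2 w2 hx
      refine ⟨comp (strCtx d (s.seq σ)) C, fun σ' h => ?_⟩
      have : s.seq σ' = s.seq σ := seq_eq fun v hv => h v (by rintro rfl; exact hx' hv)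
      simp only [seq, this, fill_comp, fill_strCtx]
      exact (NEquiv.comm _ _).trans ((str_congr d (hC σ' h)).commaCongr (.refl _))

end Shape

/-! ### Every nested sequent has a shape -/

/-- The nested sequent consisting of a list of formulae. -/
def fseq : List Formula → NSeq
  | [] => .empty
  | A :: l => (NSeq.fml A).comma (fseq l)

theorem fseq_perm {l l' : List Formula} (h : l.Perm l') : NEquiv (fseq l) (fseq l') := by
  induction h with
  | nil => exact .refl _
  | cons A _ ih => exact (NEquiv.refl _).commaCongr ih
  | swap A B l => exact neq (by simp only [fseq, q_comma]; abel)
  | trans _ _ ih1 ih2 => exact ih1.trans ih2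

/-- The nested sequent of a shape `s` whose node `x` carries the formulae `σ x`. -/
def lseq (σ : Label → List Formula) (s : Shape) : NSeq := s.seq fun x => fseq (σ x)

/-- Add nested sequents to the nodes listed in `p`. -/
def addP (σ : Label → NSeq) : List (Label × NSeq) → Label → NSeq
  | [] => σ
  | (x, X) :: p => Function.update (addP σ p) x ((addP σ p x).comma X)

theorem addP_congr {σ σ' : Label → NSeq} {v : Label} (h : σ v = σ' v) (p : List (Label × NSeq)) :
    addP σ p v = addP σ' p v := by
  induction p with
  | nil => exact h
  | cons a p ih =>
    obtain ⟨x, X⟩ := a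
    by_cases hv : v = x
    · subst hv; simp [addP, ih]
    · simp [addP, hv, ih]

theorem addP_update (σ : Label → NSeq) (x : Label) (Z : NSeq) (p : List (Label × NSeq))
    (v : Label) : NEquiv (addP (Function.update σ x (Z.comma (σ x))) p v)
      (addP σ ((x, Z) :: p) v) := by
  induction p with
  | nil =>
    by_cases hv : v = x
    · subst hv; simp only [addP, Function.update_self]; exact .comm _ _
    · simp only [addP, Function.update_of_ne hv]; exact .refl _
  | cons a p ih =>
    obtain ⟨y, Y⟩ := a
    have e1 := q_eq ih
    apply neq
    by_cases hy : v = y <;> by_cases hx : v = x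
    · subst hy; subst hx
      simp only [addP, Function.update_self, q_comma] at e1 ⊢
      rw [e1]; abel
    · subst hy
      simp only [addP, Function.update_self, q_comma, Function.update_of_ne hx] at e1 ⊢
      rw [e1]
    · subst hx
      simp only [addP, Function.update_self, q_comma, Function.update_of_ne hy] at e1 ⊢
      rw [e1]
    · simp only [addP, Function.update_of_ne hx, Function.update_of_ne hy] at e1 ⊢
      rw [e1]

theorem addP_of_not_mem {σ : Label → NSeq} {v : Label} {p : List (Label × NSeq)}
    (h : ∀ a ∈ p, a.1 ≠ v) : addP σ p v = σ v := by
  induction p with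
  | nil => rfl
  | cons a p ih =>
    obtain ⟨x, X⟩ := a
    have hv : v ≠ x := fun e => h (x, X) (by simp) e.symm
    rw [addP, Function.update_of_ne hv, ih fun a ha => h a (by simp [ha])]

/-- The number of constructors of a nested sequent. -/
def size : NSeq → Nat
  | .empty => 1
  | .fml _ => 1
  | .comma X Y => size X + size Y + 1
  | .white X => size X + 1
  | .black X => size X + 1

/-- A shape with nested sequents still pending at some of its nodes can be expanded: formulae are
stored at the node, and each pending structure `★{X}` becomes a new leaf at which `X` is pending. -/
theorem expand (n : Nat) : ∀ (p : List (Label × NSeq)) (s : Shape) (σ : Label → List Formula),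
    (p.map fun a => size a.2).sum ≤ n → s.Wf → (∀ a ∈ p, a.1 ∈ s.V) →
    ∃ (s' : Shape) (σ' : Label → List Formula), s'.Wf ∧
      NEquiv (s.seq (addP (fun x => fseq (σ x)) p)) (lseq σ' s') := by
  induction n with
  | zero =>
    intro p s σ hn hw hp
    cases p with
    | nil => exact ⟨s, σ, hw, .refl _⟩
    | cons a p =>
      obtain ⟨x, X⟩ := a
      cases X <;> simp [size] at hn
  | succ n ih =>
    intro p s σ hn hw hp
    cases p with
    | nil => exact ⟨s, σ, hw, .refl _⟩
    | cons a p =>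
      obtain ⟨x, X⟩ := a
      have hx : x ∈ s.V := hp (x, X) (by simp)
      have hp' : ∀ a ∈ p, a.1 ∈ s.V := fun a ha => hp a (by simp [ha])
      have hstr : ∀ d Y, X = str d Y → ∃ (s' : Shape) (σ' : Label → List Formula), s'.Wf ∧
          NEquiv (s.seq (addP (fun x => fseq (σ x)) ((x, X) :: p))) (lseq σ' s') := by
        rintro d Y rfl
        obtain ⟨y, hy⟩ := Infinite.exists_notMem_finset s.V
        obtain ⟨a1, a2, -⟩ := Shape.attach_spec (d := d) hw hx hy
        have hsz : size (str d Y) = size Y + 1 := by cases d <;> rfl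
        obtain ⟨s', σ', hw', he⟩ := ih ((y, Y) :: p) (s.attach x d y) (Function.update σ y [])
          (by simp [hsz] at hn ⊢; omega) a1 (by
            intro a ha
            rw [a2]
            rcases List.mem_cons.1 ha with rfl | ha
            · simp
            · simp [hp' a ha])
        refine ⟨s', σ', hw', NEquiv.trans ?_ he⟩
        rw [Shape.seq_attach]
        apply Shape.seq_congr
        intro v hv
        have hvy : v ≠ y := by rintro rfl; exact hy hv
        have hxy : x ≠ y := by rintro rfl; exact hy hx
        have e1 : ∀ w, w ≠ y → addP (fun x => fseq (Function.update σ y [] x)) p w =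
            addP (fun x => fseq (σ x)) p w := fun w hw => addP_congr (by simp [hw]) p
        have e2 : addP (fun x => fseq (Function.update σ y [] x)) p y = NSeq.empty := by
          rw [addP_of_not_mem]
          · simp [fseq]
          · rintro a ha rfl
            exact hy (hp' a ha)
        by_cases hvx : v = x
        · subst hvx
          simp only [addP, Function.update_self, Function.update_of_ne hvy, e1 v hvy, e2]
          exact (NEquiv.refl _).commaCongr
            (str_congr d (neq (by simp only [q_comma, q_empty]; abel)))
        · simp only [addP, Function.update_of_ne hvx, Function.update_of_ne hvy, e1 v hvy]
          exact .refl _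
      cases X with
      | empty =>
        obtain ⟨s', σ', hw', he⟩ := ih p s σ (by simp [size] at hn; omega) hw hp'
        refine ⟨s', σ', hw', NEquiv.trans (Shape.seq_congr fun v _ => ?_) he⟩
        by_cases hv : v = x
        · subst hv; simp only [addP, Function.update_self]; exact .unit _
        · simp only [addP, Function.update_of_ne hv]; exact .refl _
      | fml A =>
        obtain ⟨s', σ', hw', he⟩ := ih p s (Function.update σ x (A :: σ x))
          (by simp [size] at hn; omega) hw hp'
        refine ⟨s', σ', hw', NEquiv.trans (Shape.seq_congr fun v _ => ?_) he⟩
        refine (addP_update _ _ _ _ _).symm.trans ?_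
        rw [addP_congr]
        · exact .refl _
        · by_cases hv : v = x
          · subst hv; simp [fseq]
          · simp [hv]
      | comma X Y =>
        obtain ⟨s', σ', hw', he⟩ := ih ((x, X) :: (x, Y) :: p) s σ
          (by simp [size] at hn ⊢; omega) hw (by
            intro a ha
            simp only [List.mem_cons] at ha
            rcases ha with rfl | rfl | ha
            · exact hx
            · exact hx
            · exact hp' a ha)
        refine ⟨s', σ', hw', NEquiv.trans (Shape.seq_congr fun v _ => ?_) he⟩
        by_cases hv : v = x
        · subst hv
          simp only [addP, Function.update_self]
          exact neq (by simp only [q_comma]; abel)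
        · simp only [addP, Function.update_of_ne hv]; exact .refl _
      | white X => exact hstr .wd X rfl
      | black X => exact hstr .bd X rfl

theorem exists_shape (X : NSeq) : ∃ (s : Shape) (σ : Label → List Formula), s.Wf ∧
    NEquiv X (lseq σ s) := by
  obtain ⟨s', σ', hw, he⟩ := expand (size X) [(0, X)] (.pt 0) (fun _ => []) (by simp) trivial
    (by simp [Shape.V])
  refine ⟨s', σ', hw, NEquiv.trans (neq ?_) he⟩
  simp only [Shape.seq, addP, Function.update_self, fseq, q_comma, q_empty]
  abel

/-- A nested sequent maps homomorphically into the labeled graph it denotes. -/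
theorem emb_lseq (σ : Label → List Formula) (s : Shape) :
    Emb s.E {a | a.1 ∈ s.V ∧ a.2 ∈ σ a.1} (lseq σ s) s.root := by
  suffices H : ∀ (E : Finset (Label × Label)) (Γ : Set (Label × Formula)), s.E ⊆ E →
      (∀ x ∈ s.V, ∀ A ∈ σ x, (x, A) ∈ Γ) → Emb E Γ (lseq σ s) s.root from
    H _ _ (Finset.Subset.refl _) fun x hx A hA => ⟨hx, hA⟩
  intro E Γ
  induction s with
  | pt x =>
    intro _ h
    have : ∀ l : List Formula, (∀ A ∈ l, (x, A) ∈ Γ) → Emb E Γ (fseq l) x := by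
      intro l
      induction l with
      | nil => intro _; trivial
      | cons A l ih => intro h; exact ⟨h A (by simp), ih fun B hB => h B (by simp [hB])⟩
    exact this _ (h x (by simp [Shape.V]))
  | join s d t ih1 ih2 =>
    intro hE h
    refine ⟨ih1 (Finset.Subset.trans Finset.subset_union_left hE)
      fun x hx => h x (by simp [Shape.V, hx]), ?_⟩
    rw [emb_str]
    refine ⟨t.root, hE ?_, ih2 (fun e he => hE ?_) fun x hx => h x (by simp [Shape.V, hx])⟩
    · simp [Shape.E, Shape.root]
    · simp [Shape.E, he]

/-! ### From the labeled calculus to nested calculi -/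

/-- Closure of a set of nested sequents under the deep rules; propagation is required only for
sequents presented by a shape. -/
structure Closed (P : Set PathAx) (D : NSeq → Prop) : Prop where
  equiv : ∀ {X Y}, NEquiv X Y → D X → D Y
  id : ∀ C p Y, D (Ctx.fill C ((NSeq.fml (.pos p)).comma ((NSeq.fml (.neg p)).comma Y)))
  and : ∀ C A B Y, D (Ctx.fill C ((NSeq.fml A).comma Y)) → D (Ctx.fill C ((NSeq.fml B).comma Y)) →
    D (Ctx.fill C ((NSeq.fml (.and A B)).comma Y))
  or : ∀ C A B Y, D (Ctx.fill C ((NSeq.fml A).comma ((NSeq.fml B).comma Y))) →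
    D (Ctx.fill C ((NSeq.fml (.or A B)).comma Y))
  box : ∀ C d A Y,
    D (Ctx.fill C ((NSeq.fml (boxF d A)).comma ((str d (.fml A)).comma Y))) →
    D (Ctx.fill C ((NSeq.fml (boxF d A)).comma Y))
  prop : ∀ (s : Shape) (σ : Label → List Formula) (u v : Label) (A : Formula) (d : Dmd)
    (Pi : List Dmd), s.Wf → u ∈ s.V → v ∈ s.V → dmdF d A ∈ σ u → LPath s.E u v Pi →
    PStar P ⟨Pi, d⟩ → D (lseq (Function.update σ v (A :: σ v)) s) → D (lseq σ s)

/-- `Cov S C`: `S` contains `C`, or it contains what is left of `C` on some branch after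
decomposing conjunctions (into one conjunct) and disjunctions (into both disjuncts). -/
def Cov (S : List Formula) : Formula → Prop
  | .and A B => Formula.and A B ∈ S ∨ Cov S A ∨ Cov S B
  | .or A B => Formula.or A B ∈ S ∨ (Cov S A ∧ Cov S B)
  | C => C ∈ S

theorem cov_of_mem {S : List Formula} {C : Formula} (h : C ∈ S) : Cov S C := by
  cases C with
  | and A B => exact .inl h
  | or A B => exact .inl h
  | _ => exact h

theorem cov_trans {S S' : List Formula} (h : ∀ C ∈ S, Cov S' C) {C : Formula} (hC : Cov S C) :
    Cov S' C := by
  induction C with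
  | and A B ih1 ih2 =>
    rcases hC with hC | hC | hC
    · exact h _ hC
    · exact .inr (.inl (ih1 hC))
    · exact .inr (.inr (ih2 hC))
  | or A B ih1 ih2 =>
    rcases hC with hC | hC
    · exact h _ hC
    · exact .inr ⟨ih1 hC.1, ih2 hC.2⟩
  | _ => exact h _ hC

theorem cov_box {S : List Formula} {d : Dmd} {A : Formula} : Cov S (boxF d A) ↔ boxF d A ∈ S := by
  cases d <;> rfl

theorem cov_dmd {S : List Formula} {d : Dmd} {A : Formula} : Cov S (dmdF d A) ↔ dmdF d A ∈ S := by
  cases d <;> rfl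

/-- The context around a node, for a shape whose nodes carry lists of formulae. -/
theorem lseq_ctx {x : Label} {s : Shape} (hw : s.Wf) (hx : x ∈ s.V) (σ : Label → List Formula) :
    ∃ C : Ctx, NEquiv (lseq σ s) (C.fill (fseq (σ x))) ∧
      (∀ l, NEquiv (lseq (Function.update σ x l) s) (C.fill (fseq l))) ∧
      ∀ d y l, y ∉ s.V → NEquiv (lseq (Function.update σ y l) (s.attach x d y))
        (C.fill ((fseq (σ x)).comma (str d (fseq l)))) := by
  obtain ⟨C, hC⟩ := Shape.exists_ctx hw hx fun x => fseq (σ x)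
  refine ⟨C, hC _ fun _ _ => rfl, fun l => ?_, fun d y l hy => ?_⟩
  · have := hC (fun z => fseq (Function.update σ x l z)) fun v hv => by simp [hv]
    simpa [lseq] using this
  · have hxy : x ≠ y := by rintro rfl; exact hy hx
    rw [lseq, Shape.seq_attach]
    have := hC (Function.update (fun z => fseq (σ z)) x ((fseq (σ x)).comma (str d (fseq l))))
      fun v hv => by simp [hv]
    rw [Function.update_self] at this
    rw [Shape.seq_eq]
    · exact this
    · intro v hv
      have hvy : v ≠ y := by rintro rfl; exact hy hv
      by_cases hvx : v = x
      · subst hvx; simp [hvy]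
      · simp [hvx, hvy]

theorem LD.closed {P : Set PathAx} {D : NSeq → Prop} (hD : Closed P D)
    {E : Finset (Label × Label)} {Γ : Set (Label × Formula)} (h : LD P E Γ) :
    ∀ (s : Shape) (σ : Label → List Formula), s.Wf → s.E = E →
      (∀ x A, (x, A) ∈ Γ → x ∈ s.V ∧ Cov (σ x) A) → D (lseq σ s) := by
  -- Replacing `σ x` by a list that covers it preserves the covering of `Γ`.
  have upd : ∀ {Γ : Set (Label × Formula)} {s : Shape} {σ : Label → List Formula} {x l},
      (∀ z A, (z, A) ∈ Γ → z ∈ s.V ∧ Cov (σ z) A) → (∀ C ∈ σ x, Cov l C) →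
      ∀ z A, (z, A) ∈ Γ → z ∈ s.V ∧ Cov (Function.update σ x l z) A := by
    intro Γ s σ x l h hl z A hz
    refine ⟨(h z A hz).1, ?_⟩
    by_cases hzx : z = x
    · subst hzx; rw [Function.update_self]; exact cov_trans hl (h z A hz).2
    · rw [Function.update_of_ne hzx]; exact (h z A hz).2
  induction h with
  | id x p h1 h2 =>
    intro s σ hw hE hΓ
    obtain ⟨hx, c1⟩ := hΓ _ _ h1
    obtain ⟨-, c2⟩ := hΓ _ _ h2
    have c1 : Formula.pos p ∈ σ x := c1
    have c2 : Formula.neg p ∈ σ x := c2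
    obtain ⟨C, hC, -⟩ := lseq_ctx hw hx σ
    have p1 := List.perm_cons_erase c1
    have p2 := List.perm_cons_erase ((List.mem_erase_of_ne (by simp)).2 c2 :
      Formula.neg p ∈ (σ x).erase (.pos p))
    exact hD.equiv ((fill_congr C (fseq_perm (p1.trans (p2.cons _)).symm)).trans hC.symm)
      (hD.id C p _)
  | @and E Γ x A B h _ _ ih1 ih2 =>
    intro s σ hw hE hΓ
    obtain ⟨hx, c⟩ := hΓ _ _ h
    rcases c with c | c | c
    · obtain ⟨C, hC, hC', -⟩ := lseq_ctx hw hx σ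
      have p1 := List.perm_cons_erase c
      refine hD.equiv ((fill_congr C (fseq_perm p1.symm)).trans hC.symm)
        (hD.and C A B _ (hD.equiv (hC' (A :: _)) (ih1 s _ hw hE ?_))
          (hD.equiv (hC' (B :: _)) (ih2 s _ hw hE ?_)))
      · rintro z F (hz | hz)
        · cases hz
          exact ⟨hx, by rw [Function.update_self]; exact cov_of_mem (by simp)⟩
        · refine upd hΓ (fun F hF => ?_) z F hz
          rcases List.mem_cons.1 (p1.subset hF) with rfl | hF
          · exact .inr (.inl (cov_of_mem (by simp)))
          · exact cov_of_mem (by simp [hF])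
      · rintro z F (hz | hz)
        · cases hz
          exact ⟨hx, by rw [Function.update_self]; exact cov_of_mem (by simp)⟩
        · refine upd hΓ (fun F hF => ?_) z F hz
          rcases List.mem_cons.1 (p1.subset hF) with rfl | hF
          · exact .inr (.inr (cov_of_mem (by simp)))
          · exact cov_of_mem (by simp [hF])
    · refine ih1 s σ hw hE ?_
      rintro z F (hz | hz)
      · cases hz; exact ⟨hx, c⟩
      · exact hΓ z F hz
    · refine ih2 s σ hw hE ?_
      rintro z F (hz | hz)
      · cases hz; exact ⟨hx, c⟩
      · exact hΓ z F hz
  | @or E Γ x A B h _ ih =>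
    intro s σ hw hE hΓ
    obtain ⟨hx, c⟩ := hΓ _ _ h
    rcases c with c | c
    · obtain ⟨C, hC, hC', -⟩ := lseq_ctx hw hx σ
      have p1 := List.perm_cons_erase c
      refine hD.equiv ((fill_congr C (fseq_perm p1.symm)).trans hC.symm)
        (hD.or C A B _ (hD.equiv (hC' (A :: B :: _)) (ih s _ hw hE ?_)))
      rintro z F (hz | hz | hz)
      · cases hz
        exact ⟨hx, by rw [Function.update_self]; exact cov_of_mem (by simp)⟩
      · cases hz
        exact ⟨hx, by rw [Function.update_self]; exact cov_of_mem (by simp)⟩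
      · refine upd hΓ (fun F hF => ?_) z F hz
        rcases List.mem_cons.1 (p1.subset hF) with rfl | hF
        · exact .inr ⟨cov_of_mem (by simp), cov_of_mem (by simp)⟩
        · exact cov_of_mem (by simp [hF])
    · refine ih s σ hw hE ?_
      rintro z F (hz | hz | hz)
      · cases hz; exact ⟨hx, c.1⟩
      · cases hz; exact ⟨hx, c.2⟩
      · exact hΓ z F hz
  | @box E Γ d x A h _ ih =>
    intro s σ hw hE hΓ
    obtain ⟨hx, c⟩ := hΓ _ _ h
    rw [cov_box] at c
    obtain ⟨C, hC, -, hC'⟩ := lseq_ctx hw hx σ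
    obtain ⟨y, hy⟩ := Infinite.exists_notMem_finset s.V
    obtain ⟨a1, a2, a3⟩ := Shape.attach_spec (d := d) hw hx hy
    have p1 := List.perm_cons_erase c
    refine hD.equiv ((fill_congr C (fseq_perm p1.symm)).trans hC.symm)
      (hD.box C d A _ (hD.equiv ((hC' d y [A] hy).trans (fill_congr C ?_))
        (ih y _ _ a1 (by rw [a3, hE]) ?_)))
    · have e1 := q_eq (fseq_perm p1)
      have e2 : q (str d (fseq [A])) = q (str d (.fml A)) := q_eq (str_congr d (.unit _))
      apply neq
      rw [q_comma, e1, e2]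
      simp only [fseq, q_comma]
      abel
    · rw [a2]
      rintro z F (hz | hz)
      · cases hz
        exact ⟨by simp, by rw [Function.update_self]; exact cov_of_mem (by simp)⟩
      · obtain ⟨hz, hF⟩ := hΓ z F hz
        have hzy : z ≠ y := by rintro rfl; exact hy hz
        exact ⟨by simp [hz], by rwa [Function.update_of_ne hzy]⟩
  | @dia E Γ d x y A Pi h hp hP _ ih =>
    intro s σ hw hE hΓ
    obtain ⟨hx, c⟩ := hΓ _ _ h
    rw [cov_dmd] at c
    subst hE
    have hy : y ∈ s.V := Shape.path_mem hp hx
    refine hD.prop s σ x y A d Pi hw hx hy c hp hP (ih s _ hw rfl ?_)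
    rintro z F (hz | hz)
    · cases hz
      exact ⟨hy, by rw [Function.update_self]; exact cov_of_mem (by simp)⟩
    · exact upd hΓ (fun F hF => cov_of_mem (by simp [hF])) z F hz

theorem Closed.of_val {P : Set PathAx} {D : NSeq → Prop} (hD : Closed P D) {X : NSeq}
    (h : Val P X) : D X := by
  obtain ⟨s, σ, hw, he⟩ := exists_shape X
  have h1 := h s.root _ _ ((emb_equiv he _).2 (emb_lseq σ s))
  exact hD.equiv he.symm (h1.closed hD s σ hw rfl fun x A hA => ⟨hA.1, cov_of_mem hA.2⟩)

/-! ### The deep calculus is closed -/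

/-- The labels of the labeled graph which `LabT` assigns to `lseq σ s`. They are all the nodes of
`s`, except that a single node without formulae is omitted. -/
def labV (σ : Label → List Formula) : Shape → Finset Label
  | .pt x => if σ x = [] then ∅ else {x}
  | .join s _ t => labV σ s ∪ insert s.root (insert t.root (labV σ t))

theorem labV_insert (σ : Label → List Formula) (s : Shape) :
    insert s.root (labV σ s) = s.V := by
  induction s with
  | pt x => by_cases h : σ x = [] <;> simp [labV, Shape.root, Shape.V, h]
  | join s d t ih1 ih2 =>
    simp only [labV, Shape.root, Shape.V]
    rw [ih2, Finset.union_insert, Finset.insert_idem, ← Finset.insert_union, ih1]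

theorem labT_cast {x : Label} {X : NSeq} {G G' : LGraph} (h : LabT x X G) (e : G = G') :
    LabT x X G' := e ▸ h

theorem labT_fseq (x : Label) (l : List Formula) :
    LabT x (fseq l) ⟨if l = [] then ∅ else {x}, ∅, fun z => if z = x then (l : Multiset Formula)
      else 0⟩ := by
  induction l with
  | nil =>
    refine labT_cast (.empty x) ?_
    simp only [if_true, LGraph.mk.injEq, true_and]
    funext z
    split_ifs <;> rfl
  | cons A l ih =>
    refine labT_cast (.comma (.fml x A) ih Finset.inter_subset_left) ?_
    simp only [LGraph.union, LGraph.mk.injEq]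
    refine ⟨?_, rfl, ?_⟩
    · split_ifs <;> simp_all
    · funext z
      split_ifs
      · exact Multiset.singleton_add A (l : Multiset Formula)
      · rfl

theorem labT_lseq (σ : Label → List Formula) {s : Shape} (hw : s.Wf) :
    LabT s.root (lseq σ s)
      ⟨labV σ s, s.E, fun z => if z ∈ s.V then (σ z : Multiset Formula) else 0⟩ := by
  induction s with
  | pt x =>
    refine labT_cast (labT_fseq x (σ x)) ?_
    simp only [labV, Shape.E, Shape.V, LGraph.mk.injEq, true_and, Finset.mem_singleton]
    funext z
    split_ifs with h
    · rw [h]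
    · rfl
  | join s d t ih1 ih2 =>
    obtain ⟨w1, w2, w3⟩ := hw
    have sub1 : labV σ s ⊆ s.V := labV_insert σ s ▸ Finset.subset_insert _ _
    have sub2 : labV σ t ⊆ t.V := labV_insert σ t ▸ Finset.subset_insert _ _
    have hr : s.root ∉ t.V := Finset.disjoint_left.1 w3 s.root_mem
    have hne : s.root ≠ t.root := fun h => hr (h ▸ t.root_mem)
    have hstr : LabT s.root (str d (lseq σ t)) ⟨insert s.root (insert t.root (labV σ t)),
        insert (relAtom d s.root t.root) t.E,
        fun z => if z ∈ t.V then (σ z : Multiset Formula) else 0⟩ := by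
      cases d
      · exact (ih2 w2).white (fun h => hr (sub2 h)) hne
      · exact (ih2 w2).black (fun h => hr (sub2 h)) hne
    refine labT_cast (.comma (ih1 w1) hstr ?_) ?_
    rotate_left
    · simp only [LGraph.union, labV, Shape.E, Shape.V, LGraph.mk.injEq, true_and]
      funext z
      have hd : z ∈ s.V → z ∉ t.V := fun h => Finset.disjoint_left.1 w3 h
      by_cases h1 : z ∈ s.V <;> by_cases h2 : z ∈ t.V <;> simp_all
    · intro z hz
      rw [labV_insert] at hz
      obtain ⟨h1, h2⟩ := Finset.mem_inter.1 hz
      rcases Finset.mem_insert.1 h2 with h2 | h2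
      · exact Finset.mem_singleton.2 h2
      · exact absurd h2 (Finset.disjoint_left.1 w3 (sub1 h1))

theorem dkt_closed (P : Set PathAx) : Closed P (DKT (DeepPrL P)) where
  equiv h h' := .equiv h' h
  id C p Y := by
    refine .equiv (.id (comp C (.commaL .hole Y)) p) ?_
    rw [fill_comp]
    exact fill_congr C (.assoc _ _ _)
  and C A B Y h1 h2 := .andD h1 h2
  or C A B Y h := .orD h
  box C d A Y h := by
    have h := h.equiv (fill_congr C (NEquiv.assoc _ _ _).symm)
    cases d
    · have := DKT.boxD (Ext := DeepPrL P) (C := comp C (.commaL .hole Y)) (A := A)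
        (by rw [fill_comp]; exact h)
      rwa [fill_comp] at this
    · have := DKT.bboxD (Ext := DeepPrL P) (C := comp C (.commaL .hole Y)) (A := A)
        (by rw [fill_comp]; exact h)
      rwa [fill_comp] at this
  prop s σ u v A d Pi hw hu hv hA hp hP h := by
    refine .ext ⟨s.root, _, u, v, A, d, Pi, labT_lseq _ hw, hp, hP, ?_, ?_, ?_⟩ h
    · simp only [hu, if_true, Multiset.mem_coe]
      by_cases huv : u = v
      · subst huv; simp [hA]
      · simpa [huv] using hA
    · simp [hv]
    · refine labT_cast (labT_lseq σ hw) ?_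
      simp only [LGraph.mk.injEq, true_and]
      constructor
      · -- Removing `A` at `v` does not empty a one-node sequent: its node is then `u = v`, which
        -- still carries `⟨?⟩A`.
        cases s with
        | pt x =>
          simp only [Shape.V, Finset.mem_singleton] at hu hv
          subst hu; subst hv
          simp [labV, List.ne_nil_of_mem hA]
        | join s d t =>
          simp only [labV, labV_insert, Finset.union_insert]
          rw [← Finset.insert_union, labV_insert, ← Finset.insert_union, labV_insert]
      · funext z
        by_cases hz : z = v
        · subst hz; simp [hv]
        · simp [hz]

/-! ### The shallow calculus is closed -/

section Shallow

variable {Ext : NSeq → NSeq → Prop}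

theorem skt_disp {d : Dmd} {X Y : NSeq} (h : SKT Ext (X.comma (str d Y))) :
    SKT Ext (Y.comma (str d.inv X)) := by
  cases d
  · exact h.rf.equiv (.comm _ _)
  · exact h.rp.equiv (.comm _ _)

theorem skt_disp_iff {d : Dmd} {X Y : NSeq} :
    SKT Ext (X.comma (str d Y)) ↔ SKT Ext (Y.comma (str d.inv X)) :=
  ⟨skt_disp, fun h => by simpa using skt_disp h⟩

theorem skt_congr {X Y : NSeq} (h : NEquiv X Y) : SKT Ext X ↔ SKT Ext Y :=
  ⟨fun h' => h'.equiv h, fun h' => h'.equiv h.symm⟩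

/-- The display property: every substructure can be brought to the root. -/
theorem skt_display (C : Ctx) : ∃ W, ∀ Z, SKT Ext (C.fill Z) ↔ SKT Ext (Z.comma W) := by
  suffices H : ∀ V, ∃ W, ∀ Z, SKT Ext ((C.fill Z).comma V) ↔ SKT Ext (Z.comma W) by
    obtain ⟨W, hW⟩ := H .empty
    exact ⟨W, fun Z => (skt_congr (NEquiv.unit _).symm).trans (hW Z)⟩
  induction C with
  | hole => exact fun V => ⟨V, fun Z => Iff.rfl⟩
  | commaL C Y ih =>
    intro V
    obtain ⟨W, hW⟩ := ih (Y.comma V)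
    exact ⟨W, fun Z => (skt_congr (.assoc _ _ _)).trans (hW Z)⟩
  | white C ih =>
    intro V
    obtain ⟨W, hW⟩ := ih (str .bd V)
    exact ⟨W, fun Z => (skt_congr (.comm _ _)).trans ((skt_disp_iff (d := .wd)).trans (hW Z))⟩
  | black C ih =>
    intro V
    obtain ⟨W, hW⟩ := ih (str .wd V)
    exact ⟨W, fun Z => (skt_congr (.comm _ _)).trans ((skt_disp_iff (d := .bd)).trans (hW Z))⟩

/-- Sibling structures of the same kind may be merged, by weakening and contraction. -/
theorem skt_merge {d : Dmd} {W Y Z : NSeq}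
    (h : SKT Ext (W.comma ((str d Y).comma (str d Z)))) :
    SKT Ext (W.comma (str d (Y.comma Z))) := by
  have grow : ∀ {W Y Z : NSeq}, SKT Ext (W.comma (str d Y)) →
      SKT Ext (W.comma (str d (Y.comma Z))) := by
    intro W Y Z h
    refine skt_disp_iff.2 (((skt_disp h).wk (Y := Z)).equiv (neq ?_))
    simp only [q_comma]; abel
  have h1 : SKT Ext ((W.comma (str d Z)).comma (str d Y)) :=
    h.equiv (neq (by simp only [q_comma]; abel))
  have h2 : SKT Ext ((W.comma (str d (Y.comma Z))).comma (str d Z)) :=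
    (grow (Z := Z) h1).equiv (neq (by simp only [q_comma]; abel))
  have h3 := (grow (Z := Y) h2).equiv
    (((NEquiv.refl _).commaCongr (str_congr d (.comm _ _))).trans (.assoc _ _ _))
  exact h3.ctr

theorem seq_root {s : Shape} (hw : s.Wf) (σ : Label → NSeq) (Z : NSeq) :
    NEquiv (s.seq (Function.update σ s.root ((σ s.root).comma Z))) ((s.seq σ).comma Z) := by
  induction s with
  | pt z => simp only [Shape.seq, Shape.root, Function.update_self]; exact .refl _
  | join s d t ih1 _ =>
    obtain ⟨w1, -, w3⟩ := hw
    have ht : ∀ N, t.seq (Function.update σ s.root N) = t.seq σ := fun N =>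
      Shape.seq_eq fun v hv => Function.update_of_ne
        (by rintro rfl; exact Finset.disjoint_left.1 w3 s.root_mem hv) _ _
    have e1 := q_eq (ih1 w1)
    simp only [Shape.seq, Shape.root, ht]
    exact neq (by simp only [q_comma] at e1 ⊢; rw [e1]; abel)

/-- A structure hanging by an edge at `x` may be moved along an existing parallel edge of the
tree. -/
theorem skt_step {s : Shape} (hw : s.Wf) {d : Dmd} {x y : Label} (he : relAtom d x y ∈ s.E) :
    ∀ (C : Ctx) (σ : Label → NSeq) (Z : NSeq),
      SKT Ext (C.fill (s.seq (Function.update σ x ((σ x).comma (str d Z))))) →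
      SKT Ext (C.fill (s.seq (Function.update σ y ((σ y).comma Z)))) := by
  induction s with
  | pt z => simp [Shape.E] at he
  | join s e t ih1 ih2 =>
    intro C σ Z h
    obtain ⟨w1, w2, w3⟩ := hw
    have nt : ∀ {z}, z ∈ s.V → ∀ N, t.seq (Function.update σ z N) = t.seq σ := fun {z} hz N =>
      Shape.seq_eq fun v hv => Function.update_of_ne
        (by rintro rfl; exact Finset.disjoint_left.1 w3 hz hv) _ _
    have ns : ∀ {z}, z ∈ t.V → ∀ N, s.seq (Function.update σ z N) = s.seq σ := fun {z} hz N =>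
      Shape.seq_eq fun v hv => Function.update_of_ne
        (by rintro rfl; exact Finset.disjoint_left.1 w3 hv hz) _ _
    have hroot : s.root ∈ s.V := s.root_mem
    have troot : t.root ∈ t.V := t.root_mem
    simp only [Shape.E, Finset.mem_union, Finset.mem_insert] at he
    simp only [Shape.seq] at h ⊢
    rcases he with he | he | he
    · obtain ⟨hx, hy⟩ := Shape.step_mem he
      rw [nt hx] at h
      rw [nt hy]
      have := ih1 w1 he (comp C (.commaL .hole (str e (t.seq σ)))) σ Z
      rw [fill_comp, fill_comp] at this
      exact this h
    · obtain ⟨W, hW⟩ := skt_display (Ext := Ext) C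
      rw [hW] at h ⊢
      by_cases hd : d = e
      · -- The edge is traversed from the root of `s` to the root of `t`.
        subst hd
        have : x = s.root ∧ y = t.root := by
          cases d <;> simp [relAtom] at he <;> tauto
        obtain ⟨rfl, rfl⟩ := this
        rw [nt hroot] at h
        rw [ns troot]
        have e1 := q_eq (seq_root w1 σ (str d Z))
        have e2 := q_eq (str_congr d (seq_root w2 σ Z))
        have h1 : SKT Ext ((W.comma (s.seq σ)).comma ((str d (t.seq σ)).comma (str d Z))) :=
          h.equiv (neq (by simp only [q_comma] at e1 ⊢; rw [e1]; abel))
        exact (skt_merge h1).equiv (neq (by simp only [q_comma] at e2 ⊢; rw [e2]; abel))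
      · -- The edge is traversed from the root of `t` to the root of `s`.
        have : e = d.inv ∧ x = t.root ∧ y = s.root := by
          cases d <;> cases e <;> simp [relAtom, Dmd.inv] at he hd ⊢ <;> tauto
        obtain ⟨rfl, rfl, rfl⟩ := this
        rw [ns troot] at h
        rw [nt hroot]
        have e1 := q_eq (seq_root w1 σ Z)
        have e2 := q_eq (str_congr d.inv (seq_root w2 σ (str d Z)))
        have h1 : SKT Ext ((W.comma (s.seq σ)).comma
            (str d.inv ((t.seq σ).comma (str d Z)))) :=
          h.equiv (neq (by simp only [q_comma] at e2 ⊢; rw [e2]; abel))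
        have h2 := skt_disp h1
        rw [inv_inv] at h2
        have h3 := skt_disp (skt_merge (h2.equiv (neq (by simp only [q_comma]; abel)) :
          SKT Ext ((t.seq σ).comma ((str d Z).comma (str d (W.comma (s.seq σ)))))))
        exact h3.equiv (neq (by simp only [q_comma] at e1 ⊢; rw [e1]; abel))
    · obtain ⟨hx, hy⟩ := Shape.step_mem he
      rw [ns hx] at h
      rw [ns hy]
      have := ih2 w2 he (comp C (strCtx e (s.seq σ))) σ Z
      rw [fill_comp, fill_comp, fill_strCtx, fill_strCtx] at this
      exact (this (h.equiv (fill_congr C (.comm _ _)))).equiv (fill_congr C (.comm _ _))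

/-- A structure hanging by a path at `u` may be moved along an existing parallel path of the
tree. -/
theorem skt_path {s : Shape} (hw : s.Wf) {ds : List Dmd} (σ : Label → NSeq) (Z : NSeq) :
    ∀ {u v : Label}, LPath s.E u v ds →
      SKT Ext (s.seq (Function.update σ u ((σ u).comma (nestDmds ds Z)))) →
      SKT Ext (s.seq (Function.update σ v ((σ v).comma Z))) := by
  induction ds with
  | nil => intro u v p h; cases p; exact h
  | cons d ds ih =>
    intro u v p h
    obtain ⟨w, hw', p⟩ := LPath.uncons p
    rw [nestDmds_cons] at h
    exact ih p (skt_step hw hw' .hole σ _ h)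

theorem skt_reverse {ds : List Dmd} : ∀ {X Y : NSeq}, SKT Ext (X.comma (nestDmds ds Y)) →
    SKT Ext (Y.comma (nestDmds (ds.map Dmd.inv).reverse X)) := by
  induction ds with
  | nil => intro X Y h; exact h.equiv (.comm _ _)
  | cons d ds ih =>
    intro X Y h
    rw [nestDmds_cons] at h
    have := ih ((skt_disp h).equiv (.comm _ _))
    rw [List.map_cons, List.reverse_cons, nestDmds_append, nestDmds_cons]
    exact this

theorem map_inv_reverse (ds : List Dmd) :
    ((ds.map Dmd.inv).reverse.map Dmd.inv).reverse = ds := by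
  rw [List.map_reverse, List.reverse_reverse, List.map_map]
  exact (List.map_congr_left fun d _ => inv_inv d).trans (List.map_id ds)

end Shallow

/-- The structural rules of the axioms in `P` make the structural rule of every axiom of
`(P ∪ I(P))*` derivable. -/
theorem skt_pstar {P : Set PathAx} {F : PathAx} (hF : PStar P F) : ∀ {X Y : NSeq},
    SKT (NestSt (pathToGen '' P)) (X.comma (str F.suc Y)) →
    SKT (NestSt (pathToGen '' P)) (X.comma (nestDmds F.ant Y)) := by
  have base : ∀ F ∈ P, ∀ {X Y : NSeq},
      SKT (NestSt (pathToGen '' P)) (X.comma (str F.suc Y)) →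
      SKT (NestSt (pathToGen '' P)) (X.comma (nestDmds F.ant Y)) := by
    intro F hF X Y h
    refine .ext ⟨pathToGen F, ⟨F, hF, rfl⟩, X, Y, ?_, rfl⟩ h
    rw [pathToGen, nestDmds_cons]
    rfl
  induction hF with
  | base hF =>
    rcases hF with hF | ⟨G, hG, rfl⟩
    · intro X Y h; exact base _ hF h
    · intro X Y h
      have := base G hG (by simpa [PathAx.inv] using skt_disp h)
      exact skt_reverse this
  | wrefl => exact id
  | brefl => exact id
  | @comp F G i hi _ _ hFG ih1 ih2 =>
    intro X Y h
    have h2 := ih2 h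
    have hsplit : G.ant = G.ant.take i ++ F.suc :: G.ant.drop (i + 1) := by
      rw [← hFG]
      simp
    rw [hsplit, nestDmds_append, nestDmds_cons] at h2
    have h3 := skt_reverse ((ih1 ((skt_reverse h2).equiv (.comm _ _))).equiv (.comm _ _))
    rwa [map_inv_reverse, ← nestDmds_append, ← nestDmds_append] at h3


/-- The display property at a node of a shape. -/
theorem skt_node {Ext : NSeq → NSeq → Prop} {x : Label} {s : Shape} (hw : s.Wf) (hx : x ∈ s.V)
    (τ : Label → NSeq) : ∃ W, ∀ Z,
      SKT Ext (s.seq (Function.update τ x ((τ x).comma Z))) ↔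
        SKT Ext (Z.comma ((τ x).comma W)) := by
  obtain ⟨C, hC⟩ := Shape.exists_ctx hw hx τ
  obtain ⟨W, hW⟩ := skt_display (Ext := Ext) C
  refine ⟨W, fun Z => ?_⟩
  have h := hC (Function.update τ x ((τ x).comma Z)) fun v hv => Function.update_of_ne hv _ _
  rw [Function.update_self] at h
  exact (skt_congr h).trans ((hW _).trans (skt_congr (neq (by simp only [q_comma]; abel))))

theorem skt_closed (P : Set PathAx) : Closed P (SKT (NestSt (pathToGen '' P))) where
  equiv h h' := .equiv h' h
  id C p Y := by
    obtain ⟨W, hW⟩ := skt_display (Ext := NestSt (pathToGen '' P)) C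
    rw [hW]
    exact (SKT.id (W.comma Y) p).equiv (neq (by simp only [q_comma]; abel))
  and C A B Y h1 h2 := by
    obtain ⟨W, hW⟩ := skt_display (Ext := NestSt (pathToGen '' P)) C
    rw [hW] at h1 h2 ⊢
    have h1 : SKT _ ((W.comma Y).comma (.fml A)) := h1.equiv (neq (by simp only [q_comma]; abel))
    have h2 : SKT _ ((W.comma Y).comma (.fml B)) := h2.equiv (neq (by simp only [q_comma]; abel))
    exact (h1.andR h2).equiv (neq (by simp only [q_comma]; abel))
  or C A B Y h := by
    obtain ⟨W, hW⟩ := skt_display (Ext := NestSt (pathToGen '' P)) C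
    rw [hW] at h ⊢
    have h : SKT _ ((W.comma Y).comma ((NSeq.fml A).comma (.fml B))) :=
      h.equiv (neq (by simp only [q_comma]; abel))
    exact h.orR.equiv (neq (by simp only [q_comma]; abel))
  box C d A Y h := by
    obtain ⟨W, hW⟩ := skt_display (Ext := NestSt (pathToGen '' P)) C
    rw [hW] at h ⊢
    have h : SKT _ (((W.comma Y).comma (.fml (boxF d A))).comma (str d (.fml A))) :=
      h.equiv (neq (by simp only [q_comma]; abel))
    have h : SKT (NestSt (pathToGen '' P))
        (((W.comma Y).comma (.fml (boxF d A))).comma (.fml (boxF d A))) := by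
      cases d
      · exact h.box
      · exact h.bbox
    exact (h.equiv (.assoc _ _ _)).ctr.equiv (neq (by simp only [q_comma]; abel))
  prop s σ u v A d Pi hw hu hv hA hp hP h := by
    let τ : Label → NSeq := fun z => fseq (σ z)
    obtain ⟨Wu, hWu⟩ := skt_node (Ext := NestSt (pathToGen '' P)) hw hu τ
    obtain ⟨Wv, hWv⟩ := skt_node (Ext := NestSt (pathToGen '' P)) hw hv τ
    -- `U` and `V` are the whole sequent, displayed at `u` and at `v`.
    let U := (τ u).comma Wu
    let V := (τ v).comma Wv
    have h1 : SKT (NestSt (pathToGen '' P)) ((NSeq.fml A).comma V) := by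
      refine (hWv _).1 (h.equiv (Shape.seq_congr fun z _ => ?_))
      by_cases hz : z = v
      · subst hz
        simp only [Function.update_self]
        exact .comm _ _
      · simp only [Function.update_of_ne hz]
        exact .refl _
    -- Adding `U` next to `A` allows the shallow rule for `⟨?⟩A`, which `U` contains.
    have h2 : SKT (NestSt (pathToGen '' P)) (U.comma (str d (V.comma (.fml A)))) :=
      skt_disp_iff.2 ((h1.equiv (.comm _ _)).wk)
    have h3 : SKT (NestSt (pathToGen '' P)) ((U.comma (str d V)).comma (.fml (dmdF d A))) := by
      cases d
      · exact (h2.wk (Y := .fml (dmdF .wd A))).dia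
      · exact (h2.wk (Y := .fml (dmdF .bd A))).bdia
    have h4 : SKT (NestSt (pathToGen '' P)) (U.comma (str d V)) := by
      have e := q_eq (fseq_perm (List.perm_cons_erase hA))
      have e : q U = q (NSeq.fml (dmdF d A)) + q (fseq ((σ u).erase (dmdF d A))) + q Wu := by
        simp only [U, τ, q_comma, e, fseq]
      have h3 : SKT (NestSt (pathToGen '' P))
          (((Wu.comma (str d V)).comma (fseq ((σ u).erase (dmdF d A)))).comma
            ((NSeq.fml (dmdF d A)).comma (.fml (dmdF d A)))) :=
        h3.equiv (neq (by simp only [q_comma, e]; abel))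
      exact h3.ctr.equiv (neq (by simp only [q_comma, e]; abel))
    have h5 := skt_path hw τ V hp ((hWu _).2 ((skt_pstar hP h4).equiv (.comm _ _)))
    -- Both copies of the sequent are now displayed at `v`.
    have h6 : SKT (NestSt (pathToGen '' P)) (NSeq.empty.comma (V.comma V)) :=
      ((hWv V).1 h5).equiv ((NEquiv.unit _).symm.trans (.comm _ _))
    refine ((hWv .empty).2 h6.ctr).equiv (Shape.seq_congr fun z _ => ?_)
    by_cases hz : z = v
    · subst hz
      rw [Function.update_self]
      exact .unit _
    · rw [Function.update_of_ne hz]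
      exact .refl _

end TensePf

/-- Lemma `sktdktequiv`: a nested sequent `X` is derivable in
    `SKT + NestSt(P)` iff `X` is derivable in `DKT + DeepPr(P)`. -/
theorem skt_iff_dkt (P : Set PathAx) (X : NSeq) :
    SKT (NestSt (pathToGen '' P)) X ↔ DKT (DeepPrL P) X := by
  exact ⟨fun h => (TensePf.dkt_closed P).of_val (TensePf.val_of_skt h),
    fun h => (TensePf.skt_closed P).of_val (TensePf.val_of_dkt h)⟩
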